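/- For all real α,β > −1 there exist constants c > 0 and C > 0 depending only on α and β such that for every integer ℓ ≥ 1 and every θ with c/ℓ ≤ θ ≤ π − c/ℓ, |P_ℓ^{(α,β)}(cos θ) − ℓ̃^{−1/2} m_{α,β}(θ) cos ω_α(ℓ̃ θ)| ≤ C ℓ̃^{−1/2} m_{α,β}(θ) (sin θ)^{−1} ℓ^{−1}, where ℓ̃ := ℓ + (α+β+1)/2. -/

import Mathlib

open MeasureTheory Real
open scoped ENNReal NNReal

/-- The classical Jacobi polynomial `P_n^{(a,b)}` (hypergeometric representation,
normalised so that `P_n^{(a,b)}(1) = Γ(n+a+1)/(Γ(n+1)Γ(a+1))`). -/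
noncomputable def jacobiP (a b : ℝ) (n : ℕ) (x : ℝ) : ℝ :=
  ∑ s ∈ Finset.range (n + 1),
    (Real.Gamma ((n : ℝ) + a + 1) /
        (Real.Gamma ((s : ℝ) + a + 1) * (Nat.factorial (n - s) : ℝ))) *
      (Real.Gamma ((n : ℝ) + b + 1) /
        (Real.Gamma ((n : ℝ) - (s : ℝ) + b + 1) * (Nat.factorial s : ℝ))) *
      ((x - 1) / 2) ^ s * ((x + 1) / 2) ^ (n - s)

/-- `M_ℓ^{(a,b)}`, the `L₂(w_{a,b})` normalisation constant of `P_ℓ^{(a,b)}`. -/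
noncomputable def jacobiM (a b : ℝ) (ℓ : ℕ) : ℝ :=
  (2 : ℝ) ^ (a + b + 1) / (2 * (ℓ : ℝ) + a + b + 1) *
    (Real.Gamma ((ℓ : ℝ) + a + 1) * Real.Gamma ((ℓ : ℝ) + b + 1)) /
    (Real.Gamma ((ℓ : ℝ) + 1) * Real.Gamma ((ℓ : ℝ) + a + b + 1))

/-- The generalised Dirichlet kernel
`v_L^{(a,b)}(t,s) = Σ_{ℓ=0}^{L} (M_ℓ^{(a,b)})⁻¹ P_ℓ^{(a,b)}(t) P_ℓ^{(a,b)}(s)`. -/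
noncomputable def dirichletJ (a b : ℝ) (L : ℕ) (t s : ℝ) : ℝ :=
  ∑ ℓ ∈ Finset.range (L + 1), (jacobiM a b ℓ)⁻¹ * jacobiP a b ℓ t * jacobiP a b ℓ s

/-- The filtered Jacobi kernel
`v_{L,g}^{(a,b)}(t,s) = Σ_{ℓ=0}^{2L−1} g(ℓ/L) (M_ℓ^{(a,b)})⁻¹ P_ℓ^{(a,b)}(t) P_ℓ^{(a,b)}(s)`. -/
noncomputable def filteredJ (a b : ℝ) (g : ℝ → ℝ) (L : ℕ) (t s : ℝ) : ℝ :=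
  ∑ ℓ ∈ Finset.range (2 * L),
    g ((ℓ : ℝ) / (L : ℝ)) * (jacobiM a b ℓ)⁻¹ * jacobiP a b ℓ t * jacobiP a b ℓ s

/-- `Z(d,ℓ)`, the dimension of the space of spherical harmonics of degree `ℓ` on `S^d`. -/
noncomputable def Zdim (d ℓ : ℕ) : ℝ :=
  (2 * (ℓ : ℝ) + (d : ℝ) - 1) * Real.Gamma ((ℓ : ℝ) + (d : ℝ) - 1) /
    (Real.Gamma (d : ℝ) * Real.Gamma ((ℓ : ℝ) + 1))

/-- The normalised Legendre polynomial `P_ℓ^{(d+1)}` for `S^d`. -/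
noncomputable def normLegendre (d ℓ : ℕ) (t : ℝ) : ℝ :=
  jacobiP (((d : ℝ) - 2) / 2) (((d : ℝ) - 2) / 2) ℓ t /
    jacobiP (((d : ℝ) - 2) / 2) (((d : ℝ) - 2) / 2) ℓ 1

/-- The Dirichlet kernel on `S^d`: `v_L^{(d)}(t) = Σ_{ℓ=0}^L Z(d,ℓ) P_ℓ^{(d+1)}(t)`. -/
noncomputable def sphDirichlet (d L : ℕ) (t : ℝ) : ℝ :=
  ∑ ℓ ∈ Finset.range (L + 1), Zdim d ℓ * normLegendre d ℓ t

/-- The filtered kernel on `S^d`: `v_{L,g}^{(d)}(t) = Σ_{ℓ=0}^∞ g(ℓ/L) Z(d,ℓ) P_ℓ^{(d+1)}(t)`. -/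
noncomputable def sphFiltered (d : ℕ) (g : ℝ → ℝ) (L : ℕ) (t : ℝ) : ℝ :=
  ∑' ℓ : ℕ, g ((ℓ : ℝ) / (L : ℝ)) * Zdim d ℓ * normLegendre d ℓ t

/-- The surface area `|S^n| = 2π^{(n+1)/2}/Γ((n+1)/2)` of the unit sphere `S^n`. -/
noncomputable def sphereArea (n : ℕ) : ℝ :=
  2 * Real.pi ^ (((n : ℝ) + 1) / 2) / Real.Gamma (((n : ℝ) + 1) / 2)

/-- `m_{a,b}(θ) = π^{−1/2} (sin(θ/2))^{−a−1/2} (cos(θ/2))^{−b−1/2}`. -/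
noncomputable def mAB (a b θ : ℝ) : ℝ :=
  Real.pi ^ (-(1 / 2 : ℝ)) * Real.sin (θ / 2) ^ (-a - 1 / 2) *
    Real.cos (θ / 2) ^ (-b - 1 / 2)

/-- `ω_γ(z) = z − γπ/2 − π/4`. -/
noncomputable def omegaA (γ z : ℝ) : ℝ := z - γ * Real.pi / 2 - Real.pi / 4

/-!
The normalised polynomials `p n = √(n + (α + β + 1) / 2) * P_n^{(α,β)}(cos θ)` satisfy
`p (n + 2) - 2 cos θ p (n + 1) + p n = O(n⁻²) (|p (n + 1)| + |p n|)`: the normalisation is exactly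
the one that kills the terms of order `n⁻¹` in the three-term recurrence. Variation of parameters
then yields `p n = 2 Re (B e^{inθ}) + O(|B| / (n sin θ))` for some complex amplitude `B`, uniformly
in `θ`. The amplitude is an Abelian limit: if `F` is the generating function of the `P_n`, then
`√(1 - r) F(r e^{-iθ}) → √π B` as `r → 1⁻`. The closed form
`F(w) = 2^{α+β} R⁻¹ (1 - w + R)^{-α} (1 + w + R)^{-β}` with `R² = 1 - 2 w cos θ + w²`, obtained by
Lagrange inversion, gives `B = m_{α,β}(θ) / 2 * e^{iω_α((α+β+1)θ/2)}`.
-/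

/-! ### The three-term recurrence -/

section WeightedConvolution

variable {R : Type*} [CommRing R]

/-- The convolution `∑_{i+j=n} w(i,j) f i g j` of two sequences with a weight on the indices;
multiplying it by a constant is a change of weight when `f` and `g` are hypergeometric. -/
def weightedConv (w : R → R → R) (f g : ℕ → R) (n : ℕ) : R :=
  ∑ p ∈ Finset.HasAntidiagonal.antidiagonal n, w p.1 p.2 * (f p.1 * g p.2)

lemma mul_weightedConv_left {a u : R} {f : ℕ → R}
    (hf : ∀ i : ℕ, ((i : R) + 1) * (i + 1 + a) * f (i + 1) = u * f i)
    (w : R → R → R) (g : ℕ → R) (n : ℕ) :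
    u * weightedConv w f g n =
      weightedConv (fun i j => i * (i + a) * w (i - 1) j) f g (n + 1) := by
  rw [weightedConv, weightedConv, Finset.Nat.sum_antidiagonal_succ, Finset.mul_sum]
  simp only [Nat.cast_zero, zero_mul, zero_add]
  refine Finset.sum_congr rfl fun p _ => ?_
  push_cast
  rw [add_sub_cancel_right]
  linear_combination -w p.1 p.2 * g p.2 * hf p.1

lemma mul_weightedConv_right {b v : R} {g : ℕ → R}
    (hg : ∀ j : ℕ, ((j : R) + 1) * (j + 1 + b) * g (j + 1) = v * g j)
    (w : R → R → R) (f : ℕ → R) (n : ℕ) :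
    v * weightedConv w f g n =
      weightedConv (fun i j => j * (j + b) * w i (j - 1)) f g (n + 1) := by
  rw [weightedConv, weightedConv, Finset.Nat.sum_antidiagonal_succ', Finset.mul_sum]
  simp only [Nat.cast_zero, zero_mul, zero_add]
  refine Finset.sum_congr rfl fun p _ => ?_
  push_cast
  rw [add_sub_cancel_right]
  linear_combination -w p.1 p.2 * f p.1 * hg p.2

lemma weightedConv_weight_recurrence (a b : R) (f g : ℕ → R) (n : ℕ) :
    2 * ((n : R) + 2) * (n + 2 + (a + b)) * (2 * n + 2 + (a + b)) * (n + 2 + a) * (n + 2 + b) *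
        weightedConv (fun _ _ => 1) f g (n + 2) =
      (2 * n + 3 + (a + b)) * ((2 * n + 4 + (a + b)) * (2 * n + 2 + (a + b)) *
        (weightedConv (fun i _ => i * (i + a)) f g (n + 2) +
          weightedConv (fun _ j => j * (j + b)) f g (n + 2)) +
        (a ^ 2 - b ^ 2) * (weightedConv (fun _ j => j * (j + b)) f g (n + 2) -
          weightedConv (fun i _ => i * (i + a)) f g (n + 2))) -
      2 * (2 * n + 4 + (a + b)) *
        (weightedConv (fun i _ => i * (i + a) * ((i - 1) * (i - 1 + a))) f g (n + 2) -
          2 * weightedConv (fun i j => i * (i + a) * (j * (j + b))) f g (n + 2) +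
          weightedConv (fun _ j => j * (j + b) * ((j - 1) * (j - 1 + b))) f g (n + 2)) := by
  simp only [weightedConv, Finset.mul_sum, ← Finset.sum_add_distrib, ← Finset.sum_sub_distrib]
  refine Finset.sum_congr rfl fun p hp => ?_
  have hn : (n : R) = p.1 + p.2 - 2 := by
    have := congrArg (Nat.cast : ℕ → R) (Finset.HasAntidiagonal.mem_antidiagonal.mp hp)
    push_cast at this
    linear_combination -this
  rw [hn]
  ring

theorem weightedConv_recurrence {a b u v : R} {f g : ℕ → R}
    (hf : ∀ i : ℕ, ((i : R) + 1) * (i + 1 + a) * f (i + 1) = u * f i)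
    (hg : ∀ j : ℕ, ((j : R) + 1) * (j + 1 + b) * g (j + 1) = v * g j)
    (huv : v - u = 1) (n : ℕ) :
    2 * ((n : R) + 2) * (n + 2 + (a + b)) * (2 * n + 2 + (a + b)) * (n + 2 + a) * (n + 2 + b) *
        weightedConv (fun _ _ => 1) f g (n + 2) =
      (2 * n + 3 + (a + b)) * ((2 * n + 4 + (a + b)) * (2 * n + 2 + (a + b)) * (u + v) +
          (a ^ 2 - b ^ 2)) * weightedConv (fun _ _ => 1) f g (n + 1) -
        2 * (2 * n + 4 + (a + b)) * weightedConv (fun _ _ => 1) f g n := by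
  have hu := mul_weightedConv_left hf (fun _ _ => 1) g (n + 1)
  have hv := mul_weightedConv_right hg (fun _ _ => 1) f (n + 1)
  have huu := (congrArg (u * ·) (mul_weightedConv_left hf (fun _ _ => 1) g n)).trans
    (mul_weightedConv_left hf _ g (n + 1))
  have hvv := (congrArg (v * ·) (mul_weightedConv_right hg (fun _ _ => 1) f n)).trans
    (mul_weightedConv_right hg _ f (n + 1))
  have huv' := (congrArg (u * ·) (mul_weightedConv_right hg (fun _ _ => 1) f n)).trans
    (mul_weightedConv_left hf _ g (n + 1))
  simp only [mul_one] at hu hv huu hvv huv'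
  rw [weightedConv_weight_recurrence, ← hu, ← hv, ← huu, ← hvv, ← huv']
  obtain rfl : v = 1 + u := by linear_combination huv
  ring

end WeightedConvolution

/-- The coefficients `u ^ i / (Γ(i + a + 1) i!)` of the hypergeometric series `₀F₁`, of which
`P_n` is a convolution. -/
noncomputable def besselCoeff (a u : ℝ) (i : ℕ) : ℝ :=
  u ^ i / (Gamma (i + a + 1) * i.factorial)

lemma besselCoeff_succ {a : ℝ} (ha : -1 < a) (u : ℝ) (i : ℕ) :
    ((i : ℝ) + 1) * (i + 1 + a) * besselCoeff a u (i + 1) = u * besselCoeff a u i := by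
  have hpos : 0 < (i : ℝ) + a + 1 := by linarith [(Nat.cast_nonneg i : (0 : ℝ) ≤ i)]
  have hΓ : Gamma ((i : ℝ) + a + 1) ≠ 0 := (Gamma_pos_of_pos hpos).ne'
  rw [besselCoeff, besselCoeff, Nat.factorial_succ, Nat.cast_succ,
    show (i : ℝ) + 1 + a + 1 = i + a + 1 + 1 by ring, Gamma_add_one hpos.ne']
  push_cast
  field_simp
  ring

lemma jacobiP_eq_weightedConv (a b : ℝ) (n : ℕ) (x : ℝ) :
    jacobiP a b n x = Gamma (n + a + 1) * Gamma (n + b + 1) *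
      weightedConv (fun _ _ => 1)
        (besselCoeff a ((x - 1) / 2)) (besselCoeff b ((x + 1) / 2)) n := by
  rw [jacobiP, weightedConv, Finset.Nat.sum_antidiagonal_eq_sum_range_succ_mk, Finset.mul_sum]
  refine Finset.sum_congr rfl fun s hs => ?_
  rw [besselCoeff, besselCoeff, Nat.cast_sub (Finset.mem_range_succ_iff.mp hs)]
  simp only [div_eq_mul_inv, mul_inv]
  ring

theorem jacobiP_recurrence {a b : ℝ} (ha : -1 < a) (hb : -1 < b) (n : ℕ) (x : ℝ) :
    2 * ((n : ℝ) + 2) * (n + 2 + (a + b)) * (2 * n + 2 + (a + b)) * jacobiP a b (n + 2) x =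
      (2 * n + 3 + (a + b)) * ((2 * n + 4 + (a + b)) * (2 * n + 2 + (a + b)) * x +
          (a ^ 2 - b ^ 2)) * jacobiP a b (n + 1) x -
        2 * (n + 1 + a) * (n + 1 + b) * (2 * n + 4 + (a + b)) * jacobiP a b n x := by
  have hrec := weightedConv_recurrence (besselCoeff_succ ha ((x - 1) / 2))
    (besselCoeff_succ hb ((x + 1) / 2)) (by ring) n
  have Gamma_succ : ∀ c : ℝ, -1 < c → ∀ m : ℕ,
      Gamma (((m + 1 : ℕ) : ℝ) + c + 1) = (m + 1 + c) * Gamma ((m : ℝ) + c + 1) := by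
    intro c hc m
    rw [Nat.cast_succ, show (m : ℝ) + 1 + c + 1 = (m + c + 1) + 1 by ring,
      Gamma_add_one (by linarith [(Nat.cast_nonneg m : (0 : ℝ) ≤ m)])]
    ring
  rw [jacobiP_eq_weightedConv, jacobiP_eq_weightedConv, jacobiP_eq_weightedConv,
    Gamma_succ a ha (n + 1), Gamma_succ b hb (n + 1), Gamma_succ a ha n, Gamma_succ b hb n,
    Nat.cast_succ]
  linear_combination (n + 1 + a) * (n + 1 + b) * Gamma ((n : ℝ) + a + 1) *
    Gamma ((n : ℝ) + b + 1) * hrec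

/-! ### The normalised recurrence -/

open Filter Topology Asymptotics in
lemma isBigO_sub_of_analyticAt_of_hasDerivAt_zero {𝕜 E : Type*} [NontriviallyNormedField 𝕜]
    [NormedAddCommGroup E] [NormedSpace 𝕜 E] {f : 𝕜 → E} {x : 𝕜}
    (hf : AnalyticAt 𝕜 f x) (hf' : HasDerivAt f 0 x) :
    (fun y => f (x + y) - f x) =O[𝓝 0] fun y => ‖y‖ ^ 2 := by
  obtain ⟨p, hp⟩ := hf
  refine (hp.isBigO_sub_partialSum_pow 2).congr_left fun y => ?_
  have hlinear : (p 1) (fun _ => y) = 0 := by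
    rw [p.apply_eq_pow_smul_coeff, show p.coeff 1 = 0 from hp.deriv.symm.trans hf'.deriv, smul_zero]
  simp only [FormalMultilinearSeries.partialSum, Finset.sum_range_succ, Finset.range_zero,
    Finset.sum_empty, zero_add, hp.coeff_zero, hlinear, add_zero]

/-- The Jacobi polynomial scaled by the square root of the shifted degree `n + (a + b + 1) / 2`, so
that it oscillates with bounded amplitude inside `(-1, 1)`. -/
noncomputable def jacobiPNormalized (a b : ℝ) (n : ℕ) (x : ℝ) : ℝ :=
  √(n + (a + b + 1) / 2) * jacobiP a b n x

/-- The coefficient of `x p_{n+1}` in the recurrence for the normalised Jacobi polynomials, as a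
function of `y = 1 / (n + 1 + (a + b + 1) / 2)` and `σ = a + b`. -/
noncomputable def recurrenceCoeffA (σ y : ℝ) : ℝ :=
  √(1 + y) * (2 + y) / ((1 + y / 2) ^ 2 - (σ * y) ^ 2 / 4)

/-- The coefficient of `p_{n+1}` in the recurrence for the normalised Jacobi polynomials, as a
function of `y = 1 / (n + 1 + (a + b + 1) / 2)`, `σ = a + b` and `δ = a - b`. -/
noncomputable def recurrenceCoeffB (σ δ y : ℝ) : ℝ :=
  √(1 + y) * (σ * δ * y ^ 2) / (((1 + y / 2) ^ 2 - (σ * y) ^ 2 / 4) * (2 - y))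

/-- The coefficient of `-p_n` in the recurrence for the normalised Jacobi polynomials, as a
function of `y = 1 / (n + 1 + (a + b + 1) / 2)`, `σ = a + b` and `δ = a - b`. -/
noncomputable def recurrenceCoeffC (σ δ y : ℝ) : ℝ :=
  √(1 + y) / √(1 - y) * (((1 - y / 2) ^ 2 - (δ * y) ^ 2 / 4) * (2 + y)) /
    (((1 + y / 2) ^ 2 - (σ * y) ^ 2 / 4) * (2 - y))

section Coefficients

open Filter Topology Asymptotics
open scoped ContDiff

lemma recurrenceCoeffA_sub_two_isBigO (σ : ℝ) :
    (fun y => recurrenceCoeffA σ y - 2) =O[𝓝 0] fun y : ℝ => ‖y‖ ^ 2 := by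
  have hana : AnalyticAt ℝ (recurrenceCoeffA σ) 0 := by
    refine ContDiffAt.analyticAt ?_
    unfold recurrenceCoeffA
    fun_prop (disch := norm_num)
  have hderiv : HasDerivAt (recurrenceCoeffA σ) 0 0 := by
    have hy := hasDerivAt_id (0 : ℝ)
    have := (((hy.const_add 1).sqrt (by norm_num)).mul (hy.const_add 2)).div
      ((((hy.div_const 2).const_add 1).pow 2).sub (((hy.const_mul σ).pow 2).div_const 4))
      (by norm_num)
    refine this.congr_deriv ?_
    norm_num
  simpa [recurrenceCoeffA] using isBigO_sub_of_analyticAt_of_hasDerivAt_zero hana hderiv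

lemma recurrenceCoeffB_isBigO (σ δ : ℝ) :
    recurrenceCoeffB σ δ =O[𝓝 0] fun y : ℝ => ‖y‖ ^ 2 := by
  have hcont : ContinuousAt
      (fun y => √(1 + y) * (σ * δ) / (((1 + y / 2) ^ 2 - (σ * y) ^ 2 / 4) * (2 - y))) 0 := by
    fun_prop (disch := norm_num)
  refine ((hcont.isBigO_one ℝ).mul (isBigO_refl (fun y : ℝ => ‖y‖ ^ 2) _)).congr
    (fun y => ?_) fun y => one_mul _
  rw [recurrenceCoeffB, norm_eq_abs, sq_abs]
  ring

lemma recurrenceCoeffC_sub_one_isBigO (σ δ : ℝ) :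
    (fun y => recurrenceCoeffC σ δ y - 1) =O[𝓝 0] fun y : ℝ => ‖y‖ ^ 2 := by
  have hana : AnalyticAt ℝ (recurrenceCoeffC σ δ) 0 := by
    refine ContDiffAt.analyticAt ?_
    unfold recurrenceCoeffC
    fun_prop (disch := norm_num)
  have hderiv : HasDerivAt (recurrenceCoeffC σ δ) 0 0 := by
    have hy := hasDerivAt_id (0 : ℝ)
    have := ((((hy.const_add 1).sqrt (by norm_num)).div ((hy.const_sub 1).sqrt (by norm_num))
      (by norm_num)).mul (((((hy.div_const 2).const_sub 1).pow 2).sub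
        (((hy.const_mul δ).pow 2).div_const 4)).mul (hy.const_add 2))).div
      (((((hy.div_const 2).const_add 1).pow 2).sub (((hy.const_mul σ).pow 2).div_const 4)).mul
        (hy.const_sub 2)) (by norm_num)
    refine this.congr_deriv ?_
    norm_num
  simpa [recurrenceCoeffC] using isBigO_sub_of_analyticAt_of_hasDerivAt_zero hana hderiv

end Coefficients

lemma jacobiP_add_two {a b : ℝ} (ha : -1 < a) (hb : -1 < b) {n : ℕ} (hn : 1 ≤ n) (x : ℝ)
    {y : ℝ} (hy : y = (n + 1 + (a + b + 1) / 2 : ℝ)⁻¹) :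
    jacobiP a b (n + 2) x =
      (2 + y) / ((1 + y / 2) ^ 2 - ((a + b) * y) ^ 2 / 4) * x * jacobiP a b (n + 1) x +
        (a + b) * (a - b) * y ^ 2 / (((1 + y / 2) ^ 2 - ((a + b) * y) ^ 2 / 4) * (2 - y)) *
          jacobiP a b (n + 1) x -
        ((1 - y / 2) ^ 2 - ((a - b) * y) ^ 2 / 4) * (2 + y) /
          (((1 + y / 2) ^ 2 - ((a + b) * y) ^ 2 / 4) * (2 - y)) * jacobiP a b n x := by
  have hn' : (1 : ℝ) ≤ n := by exact_mod_cast hn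
  obtain ⟨N, hN⟩ : ∃ N : ℝ, N = n + 1 + (a + b + 1) / 2 := ⟨_, rfl⟩
  have hN0 : 0 < N := by linarith
  have hN1 : 0 < 2 * N - 1 := by linarith
  obtain ⟨W, hW⟩ : ∃ W : ℝ, W = (N + 1 / 2) ^ 2 - (a + b) ^ 2 / 4 := ⟨_, rfl⟩
  have hW0 : 0 < W := by
    rw [hW, hN, show ((n + 1 + (a + b + 1) / 2 : ℝ) + 1 / 2) ^ 2 - (a + b) ^ 2 / 4 =
      (n + 2) * (n + 2 + (a + b)) by ring]
    have : 0 < n + 2 + (a + b) := by linarith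
    positivity
  have hden : (1 + N⁻¹ / 2) ^ 2 - ((a + b) * N⁻¹) ^ 2 / 4 = W / N ^ 2 := by
    rw [hW]
    field_simp
  have hrec : 2 * W * (2 * N - 1) * jacobiP a b (n + 2) x =
      2 * N * ((2 * N + 1) * (2 * N - 1) * x + (a + b) * (a - b)) * jacobiP a b (n + 1) x -
        2 * ((N - 1 / 2) ^ 2 - (a - b) ^ 2 / 4) * (2 * N + 1) * jacobiP a b n x := by
    rw [hW, hN]
    linear_combination jacobiP_recurrence ha hb n x
  rw [hy, ← hN, hden]
  field_simp
  linear_combination 8 * hrec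

lemma jacobiPNormalized_add_two {a b : ℝ} (ha : -1 < a) (hb : -1 < b) {n : ℕ} (hn : 1 ≤ n)
    (x : ℝ) {y : ℝ} (hy : y = (n + 1 + (a + b + 1) / 2 : ℝ)⁻¹) :
    jacobiPNormalized a b (n + 2) x =
      recurrenceCoeffA (a + b) y * x * jacobiPNormalized a b (n + 1) x +
        recurrenceCoeffB (a + b) (a - b) y * jacobiPNormalized a b (n + 1) x -
        recurrenceCoeffC (a + b) (a - b) y * jacobiPNormalized a b n x := by
  have hn' : (1 : ℝ) ≤ n := by exact_mod_cast hn
  obtain ⟨N, hN⟩ : ∃ N : ℝ, N = n + 1 + (a + b + 1) / 2 := ⟨_, rfl⟩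
  have hN1 : 1 < N := by linarith
  have hyN : y = N⁻¹ := by rw [hy, hN]
  have hNy : N * y = 1 := by rw [hyN, mul_inv_cancel₀ (by linarith)]
  have hsucc : √(((n + 2 : ℕ) : ℝ) + (a + b + 1) / 2) = √N * √(1 + y) := by
    rw [← sqrt_mul (by linarith), mul_add, hNy, hN]
    push_cast
    ring_nf
  have hmid : √(((n + 1 : ℕ) : ℝ) + (a + b + 1) / 2) = √N := by rw [hN, Nat.cast_succ]
  have hpred : √((n : ℝ) + (a + b + 1) / 2) = √N * √(1 - y) := by
    rw [← sqrt_mul (by linarith), mul_sub, hNy, hN]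
    ring_nf
  have hsqrt : √(1 - y) ≠ 0 := by
    have : y < 1 := by rw [hyN]; exact inv_lt_one_of_one_lt₀ hN1
    exact (sqrt_pos.2 (by linarith)).ne'
  rw [jacobiPNormalized, jacobiPNormalized, jacobiPNormalized, hsucc, hmid, hpred,
    jacobiP_add_two ha hb hn x hy, recurrenceCoeffA, recurrenceCoeffB, recurrenceCoeffC]
  generalize √(1 - y) = t at *
  field_simp

lemma abs_second_difference_le_of_recurrence {x : ℝ} (hx : |x| ≤ 1) (A B C p q : ℝ) :
    |A * x * p + B * p - C * q - 2 * x * p + q| ≤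
      (|A - 2| + |B| + |C - 1|) * (|p| + |q|) := by
  calc |A * x * p + B * p - C * q - 2 * x * p + q|
      = |(A - 2) * x * p + B * p - (C - 1) * q| := by ring_nf
    _ ≤ |A - 2| * |x| * |p| + |B| * |p| + |C - 1| * |q| := by
        simp only [← abs_mul]
        exact (abs_sub _ _).trans (add_le_add_left (abs_add_le _ _) _)
    _ ≤ |A - 2| * 1 * |p| + |B| * |p| + |C - 1| * |q| := by gcongr
    _ ≤ (|A - 2| + |B| + |C - 1|) * (|p| + |q|) := by
        have hA := mul_nonneg (abs_nonneg (A - 2)) (abs_nonneg q)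
        have hB := mul_nonneg (abs_nonneg B) (abs_nonneg q)
        have hC := mul_nonneg (abs_nonneg (C - 1)) (abs_nonneg p)
        linarith

open Filter Asymptotics Topology in
theorem exists_jacobiPNormalized_second_difference_le {a b : ℝ} (ha : -1 < a) (hb : -1 < b) :
    ∃ K > 0, ∀ᶠ n : ℕ in atTop, ∀ x : ℝ, |x| ≤ 1 →
      |jacobiPNormalized a b (n + 2) x - 2 * x * jacobiPNormalized a b (n + 1) x +
          jacobiPNormalized a b n x| ≤
        K / ((n : ℝ) + 1) ^ 2 *
          (|jacobiPNormalized a b (n + 1) x| + |jacobiPNormalized a b n x|) := by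
  let A := recurrenceCoeffA (a + b)
  let B := recurrenceCoeffB (a + b) (a - b)
  let C := recurrenceCoeffC (a + b) (a - b)
  let y : ℕ → ℝ := fun n => (n + 1 + (a + b + 1) / 2)⁻¹
  have hdev : (fun y => |A y - 2| + |B y| + |C y - 1|) =O[𝓝 0] fun y : ℝ => ‖y‖ ^ 2 :=
    ((recurrenceCoeffA_sub_two_isBigO _).norm_left.add
      (recurrenceCoeffB_isBigO _ _).norm_left).add (recurrenceCoeffC_sub_one_isBigO _ _).norm_left
  have hy : Tendsto y atTop (𝓝 0) := by
    refine tendsto_inv_atTop_zero.comp (tendsto_atTop_add_const_right _ _ ?_)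
    exact tendsto_atTop_add_const_right _ _ tendsto_natCast_atTop_atTop
  have hy_le : ∀ n : ℕ, ‖y n‖ ^ 2 ≤ 4 / ((n : ℝ) + 1) ^ 2 := by
    intro n
    have hN : ((n : ℝ) + 1) / 2 ≤ n + 1 + (a + b + 1) / 2 := by
      linarith [(n.cast_nonneg : (0 : ℝ) ≤ n)]
    calc ‖y n‖ ^ 2 = ((n + 1 + (a + b + 1) / 2 : ℝ) ^ 2)⁻¹ := by
          rw [norm_inv, norm_eq_abs, inv_pow, sq_abs]
      _ ≤ (((n + 1) / 2 : ℝ) ^ 2)⁻¹ := by gcongr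
      _ = 4 / ((n : ℝ) + 1) ^ 2 := by field_simp; norm_num
  obtain ⟨K, hK, hbound⟩ := (hdev.comp_tendsto hy).exists_pos
  refine ⟨K * 4, by positivity, ?_⟩
  filter_upwards [hbound.bound, eventually_ge_atTop 1] with n hn hn1 x hx
  rw [jacobiPNormalized_add_two ha hb hn1 x rfl]
  set p := jacobiPNormalized a b (n + 1) x
  set q := jacobiPNormalized a b n x
  calc |A (y n) * x * p + B (y n) * p - C (y n) * q - 2 * x * p + q|
      ≤ (|A (y n) - 2| + |B (y n)| + |C (y n) - 1|) * (|p| + |q|) :=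
        abs_second_difference_le_of_recurrence hx _ _ _ _ _
    _ ≤ K * 4 / ((n : ℝ) + 1) ^ 2 * (|p| + |q|) := by
        gcongr
        calc _ ≤ K * ‖y n‖ ^ 2 := by simpa using (le_abs_self _).trans hn
          _ ≤ K * (4 / ((n : ℝ) + 1) ^ 2) := by gcongr; exact hy_le n
          _ = _ := by ring

/-! ### Oscillating solutions of second-order recurrences -/

section Perturbation

open Filter Topology

variable {E : Type*} [NormedAddCommGroup E] {b : ℕ → E}

lemma norm_sub_zero_le_of_norm_succ_sub_le {ε : ℕ → ℝ} {T : ℝ} (hε : ∀ k, 0 ≤ ε k)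
    (hb : ∀ k, ‖b (k + 1) - b k‖ ≤ ε k * ‖b k‖) (hT : T ≤ 1 / 2)
    (hsum : ∀ k, ∑ i ∈ Finset.range k, ε i ≤ T) (k : ℕ) :
    ‖b k - b 0‖ ≤ 2 * T * ‖b 0‖ := by
  suffices h : ‖b k - b 0‖ ≤ 2 * (∑ i ∈ Finset.range k, ε i) * ‖b 0‖ from
    h.trans (by have := hsum k; gcongr)
  induction k with
  | zero => simp
  | succ k ih =>
    have hbk : ‖b k‖ ≤ 2 * ‖b 0‖ := by
      have h1 : 2 * (∑ i ∈ Finset.range k, ε i) ≤ 1 := by linarith [hsum k]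
      have h2 := mul_le_mul_of_nonneg_right h1 (norm_nonneg (b 0))
      have h3 := norm_le_norm_add_norm_sub' (b k) (b 0)
      linarith
    calc ‖b (k + 1) - b 0‖ ≤ ‖b (k + 1) - b k‖ + ‖b k - b 0‖ := norm_sub_le_norm_sub_add_norm_sub ..
      _ ≤ ε k * (2 * ‖b 0‖) + 2 * (∑ i ∈ Finset.range k, ε i) * ‖b 0‖ := by
          gcongr
          exact (hb k).trans (mul_le_mul_of_nonneg_left hbk (hε k))
      _ = 2 * (∑ i ∈ Finset.range (k + 1), ε i) * ‖b 0‖ := by rw [Finset.sum_range_succ]; ring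

lemma norm_zero_sub_limit_le {ε : ℕ → ℝ} {T : ℝ} {B : E} (hε : ∀ k, 0 ≤ ε k)
    (hb : ∀ k, ‖b (k + 1) - b k‖ ≤ ε k * ‖b k‖) (hT : T ≤ 1 / 4)
    (hsum : ∀ k, ∑ i ∈ Finset.range k, ε i ≤ T) (hB : Tendsto b atTop (𝓝 B)) :
    ‖b 0 - B‖ ≤ 4 * T * ‖B‖ := by
  have hT0 : 0 ≤ T := by simpa using hsum 0
  have hclose : ‖B - b 0‖ ≤ 2 * T * ‖b 0‖ := le_of_tendsto' (hB.sub_const _).norm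
    (norm_sub_zero_le_of_norm_succ_sub_le hε hb (by linarith) hsum)
  have hb0 : ‖b 0‖ ≤ 2 * ‖B‖ := by
    have h1 := norm_le_norm_add_norm_sub B (b 0)
    have h2 := mul_le_mul_of_nonneg_right hT (norm_nonneg (b 0))
    linarith
  calc ‖b 0 - B‖ = ‖B - b 0‖ := norm_sub_rev ..
    _ ≤ 2 * T * (2 * ‖B‖) := hclose.trans (by gcongr)
    _ = 4 * T * ‖B‖ := by ring

lemma sum_range_div_sq_le {D : ℝ} (hD : 0 ≤ D) {n : ℕ} (hn : n ≠ 0) (k : ℕ) :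
    ∑ i ∈ Finset.range k, D / ((n + i : ℕ) + 1 : ℝ) ^ 2 ≤ D / n := by
  have hsum := sum_Ioc_inv_sq_le_sub (α := ℝ) hn (Nat.le_add_right n k)
  rw [← Finset.Ico_add_one_add_one_eq_Ioc, Finset.sum_Ico_eq_sum_range] at hsum
  simp only [div_eq_mul_inv, ← Finset.mul_sum]
  gcongr
  refine le_trans (le_of_eq ?_) (hsum.trans (sub_le_self _ (by positivity)))
  refine Finset.sum_congr (by congr 1; omega) fun i _ => ?_
  push_cast
  ring

theorem exists_limit_of_norm_succ_sub_le_div_sq [CompleteSpace E] {D : ℝ} (hD : 0 ≤ D) {n₀ : ℕ}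
    (hb : ∀ n ≥ n₀, ‖b (n + 1) - b n‖ ≤ D / ((n : ℝ) + 1) ^ 2 * ‖b n‖) :
    ∃ B : E, ∀ n : ℕ, n₀ ≤ n → n ≠ 0 → 4 * D ≤ n → ‖b n - B‖ ≤ 4 * D / n * ‖B‖ := by
  have hε : ∀ n k : ℕ, 0 ≤ D / ((n + k : ℕ) + 1 : ℝ) ^ 2 := fun n k => by positivity
  have hshift : ∀ n ≥ n₀, ∀ k, ‖b (n + (k + 1)) - b (n + k)‖ ≤
      D / ((n + k : ℕ) + 1 : ℝ) ^ 2 * ‖b (n + k)‖ := fun n hn k => hb (n + k) (by omega)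
  have hdiv : ∀ n : ℕ, n ≠ 0 → 4 * D ≤ n → D / n ≤ 1 / 4 := by
    intro n hn hDn
    rw [div_le_div_iff₀ (by positivity) (by norm_num)]
    linarith
  obtain ⟨n, hn₀, hn, hDn⟩ : ∃ n : ℕ, n₀ ≤ n ∧ n ≠ 0 ∧ 4 * D ≤ n :=
    ((eventually_ge_atTop n₀).and ((eventually_ne_atTop 0).and
      (tendsto_natCast_atTop_atTop.eventually_ge_atTop _))).exists
  have hbdd : ∀ k, ‖b (n + k)‖ ≤ 2 * ‖b n‖ := by
    intro k
    have h := norm_sub_zero_le_of_norm_succ_sub_le (b := fun k => b (n + k)) (hε n)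
      (hshift n hn₀) ((hdiv n hn hDn).trans (by norm_num)) (sum_range_div_sq_le hD hn) k
    have h1 := mul_le_mul_of_nonneg_right (hdiv n hn hDn) (norm_nonneg (b n))
    have h2 := norm_le_norm_add_norm_sub' (b (n + k)) (b n)
    simp only [add_zero] at h
    linarith [norm_nonneg (b n)]
  have hcauchy : CauchySeq fun k => b (n + k) := by
    refine cauchySeq_of_dist_le_of_summable
      (fun k => D / ((n + k : ℕ) + 1 : ℝ) ^ 2 * (2 * ‖b n‖)) (fun k => ?_) ?_
    · rw [dist_comm, dist_eq_norm]
      exact (hshift n hn₀ k).trans (mul_le_mul_of_nonneg_left (hbdd k) (hε n k))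
    · exact (summable_of_sum_range_le (hε n) (sum_range_div_sq_le hD hn)).mul_right _
  obtain ⟨B, hB⟩ := cauchySeq_tendsto_of_complete hcauchy
  have hlim : Tendsto b atTop (𝓝 B) := by
    simpa only [add_comm n, tendsto_add_atTop_iff_nat] using hB
  refine ⟨B, fun m hm₀ hm hDm => ?_⟩
  have hlim_m : Tendsto (fun k => b (m + k)) atTop (𝓝 B) := by
    simpa only [add_comm m] using (tendsto_add_atTop_iff_nat m).2 hlim
  simpa [mul_div_assoc] using norm_zero_sub_limit_le (hε m) (hshift m hm₀) (hdiv m hm hDm)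
    (sum_range_div_sq_le hD hm) hlim_m

end Perturbation

section Oscillation

variable {θ : ℝ} {p : ℕ → ℝ}

/-- The amplitude `b n` of the variation of parameters, determined by `p n = 2 Re (b n e^{inθ})` and
`p (n + 1) = 2 Re (b n e^{i(n+1)θ})`; it is constant in `n` when `p` satisfies
`p (n + 2) - 2 cos θ p (n + 1) + p n = 0`. -/
noncomputable def oscillationAmplitude (θ : ℝ) (p : ℕ → ℝ) (n : ℕ) : ℂ :=
  Complex.exp (-(θ * Complex.I)) ^ n * (p (n + 1) - Complex.exp (-(θ * Complex.I)) * p n) /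
    (2 * Complex.I * Real.sin θ)

lemma re_div_two_I_mul_ofReal (z : ℂ) (s : ℝ) : (z / (2 * Complex.I * s)).re = z.im / (2 * s) := by
  rw [show z / (2 * Complex.I * s) = -Complex.I * z / ((2 * s : ℝ) : ℂ) by
    push_cast
    rw [mul_comm 2 Complex.I, mul_assoc, div_mul_eq_div_div, Complex.div_I]
    ring, Complex.div_ofReal_re]
  simp

lemma oscillationAmplitude_mul_exp_pow (θ : ℝ) (p : ℕ → ℝ) (n : ℕ) :
    oscillationAmplitude θ p n * Complex.exp (θ * Complex.I) ^ n =
      (p (n + 1) - Complex.exp (-(θ * Complex.I)) * p n) / (2 * Complex.I * Real.sin θ) := by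
  have hpow : Complex.exp (-(θ * Complex.I)) ^ n * Complex.exp (θ * Complex.I) ^ n = 1 := by
    rw [← mul_pow, ← Complex.exp_add, neg_add_cancel, Complex.exp_zero, one_pow]
  rw [oscillationAmplitude, mul_comm (_ ^ n), div_mul_eq_mul_div, mul_assoc, hpow, mul_one]

lemma eq_two_mul_re_oscillationAmplitude (hθ : Real.sin θ ≠ 0) (n : ℕ) :
    p n = 2 * (oscillationAmplitude θ p n * Complex.exp (θ * Complex.I) ^ n).re := by
  rw [oscillationAmplitude_mul_exp_pow, re_div_two_I_mul_ofReal, ← neg_mul, ← Complex.ofReal_neg]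
  simp only [Complex.sub_im, Complex.ofReal_im, Complex.im_mul_ofReal, Complex.exp_ofReal_mul_I_im,
    Real.sin_neg]
  field_simp
  ring

lemma succ_eq_two_mul_re_oscillationAmplitude (hθ : Real.sin θ ≠ 0) (n : ℕ) :
    p (n + 1) = 2 * (oscillationAmplitude θ p n * Complex.exp (θ * Complex.I) ^ (n + 1)).re := by
  have hinv : Complex.exp (-(θ * Complex.I)) * Complex.exp (θ * Complex.I) = 1 := by
    rw [← Complex.exp_add, neg_add_cancel, Complex.exp_zero]
  rw [pow_succ, ← mul_assoc, oscillationAmplitude_mul_exp_pow, div_mul_eq_mul_div,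
    re_div_two_I_mul_ofReal, sub_mul, mul_right_comm, hinv]
  simp only [one_mul, Complex.sub_im, Complex.ofReal_im, Complex.im_ofReal_mul,
    Complex.exp_ofReal_mul_I_im]
  field_simp
  ring

lemma abs_two_mul_re_mul_exp_pow_le (z : ℂ) (θ : ℝ) (n : ℕ) :
    |2 * (z * Complex.exp (θ * Complex.I) ^ n).re| ≤ 2 * ‖z‖ := by
  rw [abs_mul, abs_two]
  gcongr
  refine (Complex.abs_re_le_norm _).trans_eq ?_
  rw [norm_mul, norm_pow, Complex.norm_exp_ofReal_mul_I, one_pow, mul_one]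

lemma norm_oscillationAmplitude_succ_sub (θ : ℝ) (p : ℕ → ℝ) (n : ℕ) :
    ‖oscillationAmplitude θ p (n + 1) - oscillationAmplitude θ p n‖ =
      |p (n + 2) - 2 * Real.cos θ * p (n + 1) + p n| / (2 * |Real.sin θ|) := by
  have hinv : Complex.exp (θ * Complex.I) * Complex.exp (-(θ * Complex.I)) = 1 := by
    rw [← Complex.exp_add, add_neg_cancel, Complex.exp_zero]
  have hcos : 2 * (Real.cos θ : ℂ) =
      Complex.exp (θ * Complex.I) + Complex.exp (-(θ * Complex.I)) := by
    rw [Complex.ofReal_cos, Complex.cos, neg_mul]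
    ring
  have hsub : oscillationAmplitude θ p (n + 1) - oscillationAmplitude θ p n =
      Complex.exp (-(θ * Complex.I)) ^ (n + 1) *
        ((p (n + 2) - 2 * Real.cos θ * p (n + 1) + p n : ℝ) : ℂ) /
          (2 * Complex.I * Real.sin θ) := by
    rw [oscillationAmplitude, oscillationAmplitude, ← sub_div]
    push_cast [-Complex.ofReal_cos, -Complex.ofReal_sin]
    rw [hcos]
    congr 1
    linear_combination Complex.exp (-(θ * Complex.I)) ^ n * p (n + 1) * hinv
  rw [hsub, norm_div, norm_mul, norm_mul, norm_pow, ← neg_mul, ← Complex.ofReal_neg,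
    Complex.norm_exp_ofReal_mul_I, Complex.norm_real, Complex.norm_real]
  simp

lemma norm_oscillationAmplitude_succ_sub_le (hθ : 0 < Real.sin θ) {ε : ℝ} {n : ℕ}
    (hp : |p (n + 2) - 2 * Real.cos θ * p (n + 1) + p n| ≤ ε * (|p (n + 1)| + |p n|))
    (hε : 0 ≤ ε) :
    ‖oscillationAmplitude θ p (n + 1) - oscillationAmplitude θ p n‖ ≤
      2 * ε / Real.sin θ * ‖oscillationAmplitude θ p n‖ := by
  have hpn := abs_two_mul_re_mul_exp_pow_le (oscillationAmplitude θ p n) θ n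
  have hpn1 := abs_two_mul_re_mul_exp_pow_le (oscillationAmplitude θ p n) θ (n + 1)
  rw [← eq_two_mul_re_oscillationAmplitude hθ.ne'] at hpn
  rw [← succ_eq_two_mul_re_oscillationAmplitude hθ.ne'] at hpn1
  rw [norm_oscillationAmplitude_succ_sub, abs_of_pos hθ, div_le_iff₀ (by positivity)]
  calc _ ≤ ε * (|p (n + 1)| + |p n|) := hp
    _ ≤ ε * (2 * ‖oscillationAmplitude θ p n‖ + 2 * ‖oscillationAmplitude θ p n‖) := by gcongr
    _ = _ := by field_simp; ring

theorem exists_oscillation_of_second_difference_le (hθ : 0 < Real.sin θ) {K : ℝ} (hK : 0 ≤ K)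
    {n₀ : ℕ} (hp : ∀ n ≥ n₀, |p (n + 2) - 2 * Real.cos θ * p (n + 1) + p n| ≤
      K / ((n : ℝ) + 1) ^ 2 * (|p (n + 1)| + |p n|)) :
    ∃ B : ℂ, ∀ n : ℕ, n₀ ≤ n → n ≠ 0 → 8 * K ≤ n * Real.sin θ →
      |p n - 2 * (B * Complex.exp (θ * Complex.I) ^ n).re| ≤
        16 * K / (n * Real.sin θ) * ‖B‖ := by
  obtain ⟨B, hB⟩ := exists_limit_of_norm_succ_sub_le_div_sq (b := oscillationAmplitude θ p)
    (D := 2 * K / Real.sin θ) (by positivity) fun n hn =>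
      (norm_oscillationAmplitude_succ_sub_le hθ (hp n hn) (by positivity)).trans_eq (by ring)
  refine ⟨B, fun n hn₀ hn hKn => ?_⟩
  have hBn := hB n hn₀ hn (by rw [← mul_div_assoc, div_le_iff₀ hθ]; linarith)
  calc |p n - 2 * (B * Complex.exp (θ * Complex.I) ^ n).re|
      = |2 * ((oscillationAmplitude θ p n - B) * Complex.exp (θ * Complex.I) ^ n).re| := by
        rw [sub_mul, Complex.sub_re, mul_sub, ← eq_two_mul_re_oscillationAmplitude hθ.ne']
    _ ≤ 2 * (4 * (2 * K / Real.sin θ) / n * ‖B‖) :=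
        (abs_two_mul_re_mul_exp_pow_le _ _ _).trans (by gcongr)
    _ = 16 * K / (n * Real.sin θ) * ‖B‖ := by field_simp; ring

end Oscillation

/-! ### Lagrange inversion -/

lemma hasFPowerSeriesAt_ofScalars_of_eventually_hasSum {a : ℕ → ℂ} {f : ℂ → ℂ}
    (h : ∀ᶠ t in nhds 0, HasSum (fun n => a n * t ^ n) (f t)) :
    HasFPowerSeriesAt f (FormalMultilinearSeries.ofScalars ℂ a) 0 := by
  rw [hasFPowerSeriesAt_iff]
  filter_upwards [h] with t ht
  simpa only [FormalMultilinearSeries.coeff_ofScalars, smul_eq_mul, mul_comm, zero_add] using ht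

lemma coeff_eq_circleIntegral {a : ℕ → ℂ} {f : ℂ → ℂ} {r : ℝ} (hr : 0 < r)
    (hf : DifferentiableOn ℂ f (Metric.closedBall 0 r))
    (h : ∀ᶠ t in nhds 0, HasSum (fun n => a n * t ^ n) (f t)) (n : ℕ) :
    a n = (2 * π * Complex.I : ℂ)⁻¹ * ∮ t in C(0, r), t⁻¹ ^ n * (t⁻¹ * f t) := by
  lift r to ℝ≥0 using hr.le
  have hcauchy := (hf.hasFPowerSeriesOnBall (by exact_mod_cast hr)).hasFPowerSeriesAt
  have heq := (hasFPowerSeriesAt_ofScalars_of_eventually_hasSum h).eq_formalMultilinearSeries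
    hcauchy
  have hcoeff := congrArg (fun p : FormalMultilinearSeries ℂ ℂ ℂ => p n fun _ => (1 : ℂ)) heq
  simp only [cauchyPowerSeries_apply] at hcoeff
  simpa [FormalMultilinearSeries.ofScalars] using hcoeff

lemma hasSum_mul_pow_of_differentiableOn_ball {a : ℕ → ℂ} {f : ℂ → ℂ} {r : ℝ}
    (hf : DifferentiableOn ℂ f (Metric.ball 0 r))
    (h : ∀ᶠ t in nhds 0, HasSum (fun n => a n * t ^ n) (f t)) {w : ℂ} (hw : ‖w‖ < r) :
    HasSum (fun n => a n * w ^ n) (f w) := by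
  obtain ⟨s, hws, hsr⟩ := exists_between hw
  lift s to ℝ≥0 using (norm_nonneg w).trans hws.le
  have hs : 0 < s := by exact_mod_cast (norm_nonneg w).trans_lt hws
  have hcauchy := (hf.mono (Metric.closedBall_subset_ball hsr)).hasFPowerSeriesOnBall hs
  rw [← (hasFPowerSeriesAt_ofScalars_of_eventually_hasSum h).eq_formalMultilinearSeries
    hcauchy.hasFPowerSeriesAt] at hcauchy
  have hsum := hcauchy.hasSum (y := w) (by
    rw [← ENNReal.ofReal_coe_nnreal, Metric.eball_ofReal]
    simpa using hws)
  simpa [FormalMultilinearSeries.ofScalars, mul_comm] using hsum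

lemma hasSum_circleIntegral_pow_mul {ρ f : ℂ → ℂ} {r q : ℝ} (hr : 0 ≤ r) (hq₀ : 0 ≤ q)
    (hq : q < 1) (hρ : ContinuousOn ρ (Metric.sphere 0 r))
    (hf : ContinuousOn f (Metric.sphere 0 r)) (hρq : ∀ t ∈ Metric.sphere 0 r, ‖ρ t‖ ≤ q) :
    HasSum (fun n : ℕ => ∮ t in C(0, r), ρ t ^ n * f t) (∮ t in C(0, r), (1 - ρ t)⁻¹ * f t) := by
  have hmem : ∀ θ : ℝ, circleMap 0 r θ ∈ Metric.sphere (0 : ℂ) r := circleMap_mem_sphere 0 hr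
  have hcρ : Continuous fun θ : ℝ => ρ (circleMap 0 r θ) :=
    hρ.comp_continuous (continuous_circleMap 0 r) hmem
  have hcf : Continuous fun θ : ℝ => f (circleMap 0 r θ) :=
    hf.comp_continuous (continuous_circleMap 0 r) hmem
  have hcd : Continuous fun θ : ℝ => deriv (circleMap 0 r) θ := by
    simp only [deriv_circleMap]
    fun_prop
  refine intervalIntegral.hasSum_integral_of_dominated_convergence
    (fun n θ => ‖deriv (circleMap 0 r) θ‖ * ‖f (circleMap 0 r θ)‖ * q ^ n)
    (fun n => (hcd.smul ((hcρ.pow n).mul hcf)).aestronglyMeasurable) (fun n => ?_) ?_ ?_ ?_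
  · refine Filter.Eventually.of_forall fun θ _ => ?_
    rw [norm_smul, norm_mul, norm_pow, mul_assoc, mul_comm (‖ρ _‖ ^ n)]
    gcongr
    exact hρq _ (hmem θ)
  · exact Filter.Eventually.of_forall fun _ _ => (summable_geometric_of_lt_one hq₀ hq).mul_left _
  · simp only [tsum_mul_left]
    exact ((hcd.norm.mul hcf.norm).mul continuous_const).intervalIntegrable _ _
  · refine Filter.Eventually.of_forall fun θ _ => HasSum.const_smul _ ?_
    exact (hasSum_geometric_of_norm_lt_one ((hρq _ (hmem θ)).trans_lt hq)).mul_right _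

-- The coefficients are contour integrals of `φ ^ n f / t ^ (n + 1)`, so the series is geometric
-- under the integral sign, and `t₁` is the only pole of `f / (t - w φ)` in the disc.
theorem hasSum_lagrange {c : ℕ → ℕ → ℂ} {φ f Q : ℂ → ℂ} {r : ℝ} {w t₁ : ℂ} (ht₁ : ‖t₁‖ < r)
    (hφ : DifferentiableOn ℂ φ (Metric.closedBall 0 r))
    (hf : DifferentiableOn ℂ f (Metric.closedBall 0 r))
    (hQ : DifferentiableOn ℂ Q (Metric.closedBall 0 r))
    (hQ₀ : ∀ t ∈ Metric.closedBall 0 r, Q t ≠ 0)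
    (hfac : ∀ t ∈ Metric.sphere 0 r, t - w * φ t = (t - t₁) * Q t)
    (hw : ∃ q < 1, ∀ t ∈ Metric.sphere 0 r, ‖w * φ t‖ ≤ q * r)
    (hc : ∀ n, ∀ᶠ t in nhds 0, HasSum (fun k => c n k * t ^ k) (φ t ^ n * f t)) :
    HasSum (fun n => c n n * w ^ n) ((Q t₁)⁻¹ * f t₁) := by
  have hr : 0 < r := (norm_nonneg t₁).trans_lt ht₁
  obtain ⟨q, hq, hwq⟩ := hw
  have hsub := Metric.sphere_subset_closedBall (x := (0 : ℂ)) (ε := r)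
  have ht₀ : ∀ t ∈ Metric.sphere (0 : ℂ) r, t ≠ 0 := fun t ht =>
    norm_pos_iff.1 (by rwa [mem_sphere_zero_iff_norm.1 ht])
  have hratio : ∀ t ∈ Metric.sphere (0 : ℂ) r, ‖t⁻¹ * (w * φ t)‖ ≤ q := fun t ht => by
    rw [norm_mul, norm_inv, mem_sphere_zero_iff_norm.1 ht, inv_mul_le_iff₀ hr, mul_comm r]
    exact hwq t ht
  have hq₀ : 0 ≤ q := (norm_nonneg _).trans (hratio r (by simp [abs_of_pos hr]))
  have hgeom := hasSum_circleIntegral_pow_mul (ρ := fun t => t⁻¹ * (w * φ t))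
    (f := fun t => t⁻¹ * f t) hr.le hq₀ hq
    ((continuousOn_id.inv₀ ht₀).mul (continuousOn_const.mul (hφ.continuousOn.mono hsub)))
    ((continuousOn_id.inv₀ ht₀).mul (hf.continuousOn.mono hsub)) hratio
  have hcauchy := ((hQ.inv hQ₀).mul hf).circleIntegral_sub_inv_smul (w := t₁) (by simpa using ht₁)
  have hpole : (2 * π * Complex.I : ℂ)⁻¹ *
      (∮ t in C(0, r), (1 - t⁻¹ * (w * φ t))⁻¹ * (t⁻¹ * f t)) = (Q t₁)⁻¹ * f t₁ := by
    rw [← inv_mul_cancel_left₀ Complex.two_pi_I_ne_zero ((Q t₁)⁻¹ * f t₁)]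
    refine congrArg _ (Eq.trans ?_ hcauchy)
    refine circleIntegral.integral_congr hr.le fun t ht => ?_
    have hden : (1 - t⁻¹ * (w * φ t)) * t = (t - t₁) * Q t := by
      rw [← hfac t ht]
      field_simp [ht₀ t ht]
    simp only [smul_eq_mul, Pi.mul_apply, Pi.inv_apply]
    rw [← mul_assoc, ← mul_inv, hden, mul_inv, mul_assoc]
  rw [← hpole]
  refine (hgeom.mul_left _).congr_fun fun n => ?_
  rw [coeff_eq_circleIntegral hr ((hφ.pow n).mul hf) (hc n) n, mul_assoc, mul_comm _ (w ^ n),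
    ← circleIntegral.integral_const_mul]
  refine congrArg _ (circleIntegral.integral_congr hr.le fun t _ => ?_)
  simp only [mul_pow, Pi.mul_apply, Pi.pow_apply]
  ring

/-! ### The generating function -/

lemma choose_mul_Gamma_mul_factorial {γ : ℝ} {k : ℕ} (h : -1 < γ - k) :
    Ring.choose γ k * (Gamma (γ - k + 1) * k.factorial) = Gamma (γ + 1) := by
  induction k with
  | zero => simp
  | succ k ih =>
    push_cast at h
    have hfact : ∀ m : ℕ, (m.factorial : ℝ) * Ring.choose γ m = (descPochhammer ℤ m).smeval γ :=
      fun m => by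
        rw [Ring.choose_eq_smul, smul_eq_mul, mul_inv_cancel_left₀ (by positivity)]
    have hsucc : (descPochhammer ℤ (k + 1)).smeval γ = (descPochhammer ℤ k).smeval γ * (γ - k) := by
      simp [descPochhammer_succ_right, Polynomial.smeval_mul, Polynomial.smeval_natCast]
    have hΓ : Gamma (γ - k + 1) = (γ - k) * Gamma (γ - k) := Gamma_add_one (by linarith)
    calc Ring.choose γ (k + 1) * (Gamma (γ - (k + 1 : ℕ) + 1) * (k + 1).factorial)
        = (k + 1).factorial * Ring.choose γ (k + 1) * Gamma (γ - k) := by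
          rw [show γ - (k + 1 : ℕ) + 1 = γ - k by push_cast; ring]
          ring
      _ = Ring.choose γ k * (Gamma (γ - k + 1) * k.factorial) := by
          rw [hfact, hsucc, ← hfact, hΓ]
          ring
      _ = Gamma (γ + 1) := ih (by linarith)

lemma hasSum_choose_mul_pow (s : ℂ) {z : ℂ} (hz : ‖z‖ < 1) :
    HasSum (fun k : ℕ => Ring.choose s k * z ^ k) ((1 + z) ^ s) ∧
      Summable fun k : ℕ => ‖Ring.choose s k * z ^ k‖ := by
  have hball := Complex.one_add_cpow_hasFPowerSeriesOnBall_zero (a := s)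
  have hz' : z ∈ Metric.eball (0 : ℂ) 1 := by
    rw [← ENNReal.ofReal_one, Metric.eball_ofReal]
    simpa using hz
  have hsum := hball.hasSum hz'
  have hnorm := (binomialSeries ℂ s).summable_norm_apply
    (Metric.eball_subset_eball hball.r_le hz')
  simp only [binomialSeries_apply, List.ofFn_const, List.prod_replicate, smul_eq_mul,
    zero_add] at hsum hnorm
  exact ⟨hsum, hnorm⟩

lemma hasSum_one_add_mul_cpow_mul_cpow (s s' : ℂ) {u v t : ℂ} (hu : ‖u * t‖ < 1)
    (hv : ‖v * t‖ < 1) :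
    HasSum (fun n => (∑ p ∈ Finset.HasAntidiagonal.antidiagonal n,
        (Ring.choose s p.1 * u ^ p.1) * (Ring.choose s' p.2 * v ^ p.2)) * t ^ n)
      ((1 + u * t) ^ s * (1 + v * t) ^ s') := by
  obtain ⟨hsum, hnorm⟩ := hasSum_choose_mul_pow s hu
  obtain ⟨hsum', hnorm'⟩ := hasSum_choose_mul_pow s' hv
  have hprod := (summable_norm_sum_mul_antidiagonal_of_summable_norm hnorm hnorm').of_norm.hasSum
  rw [← tsum_mul_tsum_eq_tsum_sum_antidiagonal_of_summable_norm hnorm hnorm', hsum.tsum_eq,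
    hsum'.tsum_eq] at hprod
  refine hprod.congr_fun fun n => ?_
  rw [Finset.sum_mul]
  refine Finset.sum_congr rfl fun p hp => ?_
  rw [← Finset.HasAntidiagonal.mem_antidiagonal.mp hp, pow_add, mul_pow, mul_pow]
  ring

lemma hasSum_mul_pow_mul_cpow_mul_cpow (n : ℕ) (s s' : ℂ) {u v t : ℂ} (hu : ‖u * t‖ < 1)
    (hv : ‖v * t‖ < 1) :
    HasSum (fun k => (∑ p ∈ Finset.HasAntidiagonal.antidiagonal k,
        (Ring.choose (n + s) p.1 * u ^ p.1) * (Ring.choose (n + s') p.2 * v ^ p.2)) * t ^ k)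
      (((1 + u * t) * (1 + v * t)) ^ n * ((1 + u * t) ^ s * (1 + v * t) ^ s')) := by
  convert hasSum_one_add_mul_cpow_mul_cpow (n + s) (n + s') hu hv using 1
  rw [Complex.cpow_add _ _ (Complex.slitPlane_ne_zero (Complex.mem_slitPlane_of_norm_lt_one hu)),
    Complex.cpow_add _ _ (Complex.slitPlane_ne_zero (Complex.mem_slitPlane_of_norm_lt_one hv)),
    Complex.cpow_natCast, Complex.cpow_natCast, mul_pow]
  ring

lemma jacobiP_eq_sum_choose {α β : ℝ} (hα : -1 < α) (hβ : -1 < β) (n : ℕ) (x : ℝ) :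
    jacobiP α β n x = ∑ p ∈ Finset.HasAntidiagonal.antidiagonal n,
      (Ring.choose (n + β) p.1 * ((x - 1) / 2) ^ p.1) *
        (Ring.choose (n + α) p.2 * ((x + 1) / 2) ^ p.2) := by
  rw [jacobiP_eq_weightedConv, weightedConv, Finset.mul_sum]
  refine Finset.sum_congr rfl fun p hp => ?_
  have hn : (n : ℝ) = p.1 + p.2 := by
    rw [← Finset.HasAntidiagonal.mem_antidiagonal.mp hp]
    push_cast
    ring
  have hi : (0 : ℝ) ≤ p.1 := p.1.cast_nonneg
  have hj : (0 : ℝ) ≤ p.2 := p.2.cast_nonneg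
  have hchoose := choose_mul_Gamma_mul_factorial (γ := n + β) (k := p.1)
    (by rw [hn]; linarith [hj])
  have hchoose' := choose_mul_Gamma_mul_factorial (γ := n + α) (k := p.2)
    (by rw [hn]; linarith [hi])
  rw [show (n : ℝ) + β - p.1 + 1 = p.2 + β + 1 by rw [hn]; ring] at hchoose
  rw [show (n : ℝ) + α - p.2 + 1 = p.1 + α + 1 by rw [hn]; ring] at hchoose'
  have hΓ : Gamma (p.2 + β + 1) ≠ 0 := (Gamma_pos_of_pos (by linarith [hj])).ne'
  have hΓ' : Gamma (p.1 + α + 1) ≠ 0 := (Gamma_pos_of_pos (by linarith [hi])).ne'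
  rw [← hchoose, ← hchoose', besselCoeff, besselCoeff]
  field_simp

section GeneratingRoot

variable {x w R : ℂ}

lemma one_sub_add_mul_one_add_add (hR : R ^ 2 = 1 - 2 * x * w + w ^ 2) :
    (1 - w + R) * (1 + w + R) = 2 * (1 - x * w + R) := by
  linear_combination hR

/-- The root of `t = w (1 + (x - 1) / 2 * t) (1 + (x + 1) / 2 * t)` that vanishes with `w`, where
`R` is the square root of `1 - 2 x w + w ^ 2` that is near `1`. -/
noncomputable def generatingRoot (x w R : ℂ) : ℂ :=
  2 * w / (1 - x * w + R)

lemma one_add_mul_generatingRoot (hR : R ^ 2 = 1 - 2 * x * w + w ^ 2) (hD : 1 - x * w + R ≠ 0) :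
    1 + (x - 1) / 2 * generatingRoot x w R = 2 / (1 + w + R) ∧
      1 + (x + 1) / 2 * generatingRoot x w R = 2 / (1 - w + R) := by
  have hprod := one_sub_add_mul_one_add_add hR
  have hne : (1 - w + R) * (1 + w + R) ≠ 0 := hprod ▸ mul_ne_zero two_ne_zero hD
  obtain ⟨hm, hp⟩ := mul_ne_zero_iff.1 hne
  constructor <;> rw [generatingRoot] <;> field_simp <;> linear_combination hR

lemma generatingRoot_quadratic (hR : R ^ 2 = 1 - 2 * x * w + w ^ 2) (hD : 1 - x * w + R ≠ 0) :
    (1 - x * w + R) / 2 + w * ((x ^ 2 - 1) / 4) * generatingRoot x w R = 1 - x * w := by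
  rw [generatingRoot]
  field_simp
  linear_combination 4 * hR

lemma sub_mul_eq_sub_generatingRoot_mul (hR : R ^ 2 = 1 - 2 * x * w + w ^ 2)
    (hD : 1 - x * w + R ≠ 0) (t : ℂ) :
    t - w * ((1 + (x - 1) / 2 * t) * (1 + (x + 1) / 2 * t)) =
      (t - generatingRoot x w R) * ((1 - x * w + R) / 2 - w * ((x ^ 2 - 1) / 4) * t) := by
  have hroot : (1 - x * w + R) * generatingRoot x w R = 2 * w := mul_div_cancel₀ _ hD
  linear_combination -t * generatingRoot_quadratic hR hD + hroot / 2

end GeneratingRoot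

/-- The generating function `∑ P_n^{(α,β)}(x) w ^ n` in closed form, where `R` stands for the
square root of `1 - 2 x w + w ^ 2`. -/
noncomputable def jacobiGenFun (α β : ℝ) (w R : ℂ) : ℂ :=
  R⁻¹ * (2 / (1 - w + R)) ^ (α : ℂ) * (2 / (1 + w + R)) ^ (β : ℂ)

section SmallDisc

variable {x w R : ℂ}

lemma norm_sub_one_div_two_mul_le (hx : ‖x‖ ≤ 1) (t : ℂ) : ‖(x - 1) / 2 * t‖ ≤ ‖t‖ := by
  have htri := norm_sub_le x 1
  rw [norm_mul, norm_div, Complex.norm_two]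
  exact mul_le_of_le_one_left (norm_nonneg t) (by linarith [norm_one (α := ℂ)])

lemma norm_add_one_div_two_mul_le (hx : ‖x‖ ≤ 1) (t : ℂ) : ‖(x + 1) / 2 * t‖ ≤ ‖t‖ := by
  rw [← norm_neg, ← neg_mul, ← neg_div, neg_add']
  exact norm_sub_one_div_two_mul_le (by rwa [norm_neg]) t

lemma lt_norm_one_sub_mul_add (hx : ‖x‖ ≤ 1) (hw : ‖w‖ < 1 / 8) (hR : 0 < R.re) :
    7 / 8 < ‖1 - x * w + R‖ := by
  have hxw : ‖x * w‖ < 1 / 8 := by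
    rw [norm_mul]
    exact (mul_le_of_le_one_left (norm_nonneg w) hx).trans_lt hw
  refine lt_of_lt_of_le ?_ (Complex.re_le_norm _)
  rw [Complex.add_re, Complex.sub_re, Complex.one_re]
  linarith [Complex.re_le_norm (x * w)]

lemma norm_generatingRoot_lt (hx : ‖x‖ ≤ 1) (hw : ‖w‖ < 1 / 8) (hR : 0 < R.re) :
    ‖generatingRoot x w R‖ < 1 / 2 := by
  have hD := lt_norm_one_sub_mul_add hx hw hR
  rw [generatingRoot, norm_div, norm_mul, Complex.norm_two, div_lt_iff₀ (by linarith)]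
  linarith

lemma generatingRoot_cofactor_ne_zero (hx : ‖x‖ ≤ 1) (hw : ‖w‖ < 1 / 8) (hR : 0 < R.re) {t : ℂ}
    (ht : ‖t‖ ≤ 1 / 2) : (1 - x * w + R) / 2 - w * ((x ^ 2 - 1) / 4) * t ≠ 0 := by
  have hD := lt_norm_one_sub_mul_add hx hw hR
  intro hzero
  have hsmall : ‖(x - 1) / 2 * ((x + 1) / 2 * t)‖ ≤ 1 / 2 :=
    (norm_sub_one_div_two_mul_le hx _).trans ((norm_add_one_div_two_mul_le hx t).trans ht)
  have heq : ‖1 - x * w + R‖ = 2 * (‖w‖ * ‖(x - 1) / 2 * ((x + 1) / 2 * t)‖) := by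
    rw [← norm_mul, ← Complex.norm_two, ← norm_mul]
    congr 1
    linear_combination 2 * hzero
  nlinarith [norm_nonneg w]

lemma norm_mul_one_add_mul_one_add_le (hx : ‖x‖ ≤ 1) {t : ℂ} (ht : ‖t‖ ≤ 1 / 2) :
    ‖w * ((1 + (x - 1) / 2 * t) * (1 + (x + 1) / 2 * t))‖ ≤ 9 / 2 * ‖w‖ * (1 / 2) := by
  have hleft := norm_add_le 1 ((x - 1) / 2 * t)
  have hright := norm_add_le 1 ((x + 1) / 2 * t)
  have hleft' := norm_sub_one_div_two_mul_le hx t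
  have hright' := norm_add_one_div_two_mul_le hx t
  rw [norm_one] at hleft hright
  rw [norm_mul, norm_mul]
  calc ‖w‖ * (‖1 + (x - 1) / 2 * t‖ * ‖1 + (x + 1) / 2 * t‖) ≤ ‖w‖ * (3 / 2 * (3 / 2)) := by
        gcongr <;> linarith
    _ = 9 / 2 * ‖w‖ * (1 / 2) := by ring

end SmallDisc

-- `P_n` is the coefficient of `t ^ n` in `φ ^ n f` for `φ = (1 + u t) (1 + v t)` and
-- `f = (1 + u t) ^ β (1 + v t) ^ α`, where `u = (x - 1) / 2` and `v = (x + 1) / 2`.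
lemma hasSum_jacobiP_mul_pow_of_norm_lt {α β : ℝ} (hα : -1 < α) (hβ : -1 < β) {x : ℝ}
    (hx : |x| ≤ 1) {w R : ℂ} (hw : ‖w‖ < 1 / 8) (hR : R ^ 2 = 1 - 2 * x * w + w ^ 2)
    (hR₀ : 0 < R.re) :
    HasSum (fun n : ℕ => (jacobiP α β n x : ℂ) * w ^ n) (jacobiGenFun α β w R) := by
  have hx' : ‖(x : ℂ)‖ ≤ 1 := by rwa [Complex.norm_real]
  have hD : 1 - x * w + R ≠ 0 :=
    norm_pos_iff.1 (by linarith [lt_norm_one_sub_mul_add hx' hw hR₀])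
  have hball : ∀ t ∈ Metric.closedBall (0 : ℂ) (1 / 2), ‖t‖ ≤ 1 / 2 := fun t ht => by
    simpa using ht
  have hu : ∀ {t : ℂ}, ‖t‖ < 1 → ‖((x : ℂ) - 1) / 2 * t‖ < 1 := fun {t} ht =>
    (norm_sub_one_div_two_mul_le hx' t).trans_lt ht
  have hv : ∀ {t : ℂ}, ‖t‖ < 1 → ‖((x : ℂ) + 1) / 2 * t‖ < 1 := fun {t} ht =>
    (norm_add_one_div_two_mul_le hx' t).trans_lt ht
  have hlagrange := hasSum_lagrange (r := 1 / 2) (w := w)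
    (φ := fun t => (1 + ((x : ℂ) - 1) / 2 * t) * (1 + ((x : ℂ) + 1) / 2 * t))
    (f := fun t => (1 + ((x : ℂ) - 1) / 2 * t) ^ (β : ℂ) * (1 + ((x : ℂ) + 1) / 2 * t) ^ (α : ℂ))
    (Q := fun t => (1 - x * w + R) / 2 - w * (((x : ℂ) ^ 2 - 1) / 4) * t)
    (norm_generatingRoot_lt hx' hw hR₀) (by fun_prop) (fun t ht => ?_) (by fun_prop)
    (fun t ht => generatingRoot_cofactor_ne_zero hx' hw hR₀ (hball t ht))
    (fun t _ => sub_mul_eq_sub_generatingRoot_mul hR hD t)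
    ⟨9 / 2 * ‖w‖, by linarith, fun t ht => norm_mul_one_add_mul_one_add_le hx'
      (hball t (Metric.sphere_subset_closedBall ht))⟩
    (fun n => Filter.eventually_of_mem (Metric.ball_mem_nhds 0 one_pos) fun t ht =>
      hasSum_mul_pow_mul_cpow_mul_cpow n β α (hu (by simpa using ht)) (hv (by simpa using ht)))
  · have hQ : (1 - x * w + R) / 2 - w * (((x : ℂ) ^ 2 - 1) / 4) * generatingRoot x w R = R := by
      linear_combination -generatingRoot_quadratic hR hD
    obtain ⟨hleft, hright⟩ := one_add_mul_generatingRoot hR hD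
    rw [hQ, hleft, hright, mul_comm (_ ^ (β : ℂ)), ← mul_assoc] at hlagrange
    refine hlagrange.congr_fun fun n => ?_
    rw [jacobiP_eq_sum_choose hα hβ]
    push_cast [Complex.ofReal_choose]
    rfl
  · have ht' : ‖t‖ < 1 := (hball t ht).trans_lt (by norm_num)
    refine DifferentiableAt.differentiableWithinAt (.mul ?_ ?_)
    · exact .cpow_const (by fun_prop) (Complex.mem_slitPlane_of_norm_lt_one (hu ht'))
    · exact .cpow_const (by fun_prop) (Complex.mem_slitPlane_of_norm_lt_one (hv ht'))

/-! ### The generating function on the unit disc -/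

lemma re_one_sub_pos {z : ℂ} (hz : ‖z‖ ≤ 1) (hz₁ : z ≠ 1) : 0 < (1 - z).re := by
  rw [Complex.sub_re, Complex.one_re, sub_pos]
  refine ((Complex.re_le_norm z).trans hz).lt_of_ne fun hre => hz₁ ?_
  have him : z.im = 0 := Complex.abs_re_eq_norm.1
    (le_antisymm (Complex.abs_re_le_norm z) (by rwa [hre, abs_one]))
  exact Complex.ext hre him

lemma complexSqrt_sq (z : ℂ) : z.sqrt ^ 2 = z :=
  Complex.cpow_ofNat_inv_pow z 2

lemma abs_im_complexSqrt_lt_re {z : ℂ} (hz : 0 < z.re) : |z.sqrt.im| < z.sqrt.re := by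
  rw [Complex.sqrt, Complex.abs_cpow_inv_two_im, Complex.cpow_inv_two_re]
  exact Real.sqrt_lt_sqrt (by linarith [Complex.re_le_norm z]) (by linarith)

lemma complexSqrt_ne_zero {z : ℂ} (hz : z ≠ 0) : z.sqrt ≠ 0 := by
  rw [Complex.sqrt, Ne, Complex.cpow_eq_zero_iff]
  exact fun h => hz h.1

lemma differentiableAt_complexSqrt {z : ℂ} (hz : z ∈ Complex.slitPlane) :
    DifferentiableAt ℂ Complex.sqrt z :=
  differentiableAt_id.cpow_const hz

lemma re_mul_pos_of_abs_im_lt_re {z z' : ℂ} (hz : |z.im| < z.re) (hz' : |z'.im| < z'.re) :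
    0 < (z * z').re := by
  rw [Complex.mul_re, sub_pos]
  calc z.im * z'.im ≤ |z.im| * |z'.im| := by rw [← abs_mul]; exact le_abs_self _
    _ < z.re * z'.re := mul_lt_mul'' hz hz' (abs_nonneg _) (abs_nonneg _)

lemma two_div_mem_slitPlane {z : ℂ} (hz : 0 < z.re) : 2 / z ∈ Complex.slitPlane := by
  refine Complex.mem_slitPlane_iff.2 (.inl ?_)
  have hz₀ : z ≠ 0 := fun h => by simp [h] at hz
  have hnorm := Complex.normSq_pos.2 hz₀
  rw [Complex.div_re]
  simp only [Complex.re_ofNat, Complex.im_ofNat, zero_mul, zero_div, add_zero]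
  positivity

/-- The square root of `1 - 2 x w + w ^ 2`, where `2 x = e + e⁻¹`, with positive real part for
`‖w‖ < 1 = ‖e‖`. -/
noncomputable def generatingSqrt (e w : ℂ) : ℂ :=
  (1 - e * w).sqrt * (1 - e⁻¹ * w).sqrt

section GeneratingSqrt

variable {e w : ℂ}

lemma generatingSqrt_sq (he : e ≠ 0) : generatingSqrt e w ^ 2 = 1 - (e + e⁻¹) * w + w ^ 2 := by
  rw [generatingSqrt, mul_pow, complexSqrt_sq, complexSqrt_sq]
  linear_combination w ^ 2 * mul_inv_cancel₀ he

lemma re_one_sub_mul_pos (he : ‖e‖ = 1) (hw : ‖w‖ < 1) : 0 < (1 - e * w).re := by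
  have hew : ‖e * w‖ < 1 := by rwa [norm_mul, he, one_mul]
  exact re_one_sub_pos hew.le fun h => by simp [h] at hew

lemma re_one_sub_inv_mul_pos (he : ‖e‖ = 1) (hw : ‖w‖ < 1) : 0 < (1 - e⁻¹ * w).re :=
  re_one_sub_mul_pos (by rw [norm_inv, he, inv_one]) hw

lemma re_generatingSqrt_pos (he : ‖e‖ = 1) (hw : ‖w‖ < 1) : 0 < (generatingSqrt e w).re :=
  re_mul_pos_of_abs_im_lt_re (abs_im_complexSqrt_lt_re (re_one_sub_mul_pos he hw))
    (abs_im_complexSqrt_lt_re (re_one_sub_inv_mul_pos he hw))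

lemma differentiableAt_generatingSqrt (he : ‖e‖ = 1) (hw : ‖w‖ < 1) :
    DifferentiableAt ℂ (generatingSqrt e) w :=
  .mul (.cpow_const (by fun_prop) (.inl (re_one_sub_mul_pos he hw)))
    (.cpow_const (by fun_prop) (.inl (re_one_sub_inv_mul_pos he hw)))

lemma differentiableAt_jacobiGenFun_generatingSqrt (α β : ℝ) (he : ‖e‖ = 1) (hw : ‖w‖ < 1) :
    DifferentiableAt ℂ (fun w => jacobiGenFun α β w (generatingSqrt e w)) w := by
  have hR := re_generatingSqrt_pos he hw
  have hdiff := differentiableAt_generatingSqrt he hw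
  have hleft : 0 < (1 - w + generatingSqrt e w).re := by
    have := re_one_sub_mul_pos norm_one hw
    rw [one_mul] at this
    exact add_pos this hR
  have hright : 0 < (1 + w + generatingSqrt e w).re := by
    have := re_one_sub_mul_pos (e := -1) (by rw [norm_neg, norm_one]) hw
    rw [neg_one_mul, sub_neg_eq_add] at this
    exact add_pos this hR
  have hne : ∀ {z : ℂ}, 0 < z.re → z ≠ 0 := fun hz h => by simp [h] at hz
  exact ((hdiff.inv (hne hR)).mul
    (.cpow_const (.div (by fun_prop) (by fun_prop) (hne hleft)) (two_div_mem_slitPlane hleft))).mul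
    (.cpow_const (.div (by fun_prop) (by fun_prop) (hne hright)) (two_div_mem_slitPlane hright))

lemma hasSum_jacobiP_mul_pow {α β : ℝ} (hα : -1 < α) (hβ : -1 < β) {x : ℝ} (he : ‖e‖ = 1)
    (hx : 2 * x = e + e⁻¹) (hw : ‖w‖ < 1) :
    HasSum (fun n : ℕ => (jacobiP α β n x : ℂ) * w ^ n)
      (jacobiGenFun α β w (generatingSqrt e w)) := by
  have hx' : |x| ≤ 1 := by
    have h := norm_add_le e e⁻¹
    rw [← hx, norm_mul, norm_inv, he, Complex.norm_two, Complex.norm_real, Real.norm_eq_abs] at h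
    linarith
  refine hasSum_mul_pow_of_differentiableOn_ball
    (f := fun w => jacobiGenFun α β w (generatingSqrt e w)) (fun w hw => ?_) ?_ hw
  · exact (differentiableAt_jacobiGenFun_generatingSqrt α β he
      (mem_ball_zero_iff.1 hw)).differentiableWithinAt
  · filter_upwards [Metric.ball_mem_nhds (0 : ℂ) (ε := 1 / 8) (by norm_num)] with t ht
    have ht' := mem_ball_zero_iff.1 ht
    refine hasSum_jacobiP_mul_pow_of_norm_lt hα hβ hx' ht' ?_
      (re_generatingSqrt_pos he (by linarith))
    rw [hx, generatingSqrt_sq (norm_pos_iff.1 (by rw [he]; exact one_pos))]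

end GeneratingSqrt

/-! ### An Abelian theorem -/

/-- The coefficients `C(2n, n) / 4 ^ n` of the power series of `(1 - z) ^ (-1/2)`. -/
noncomputable def invSqrtCoeff (n : ℕ) : ℝ :=
  n.centralBinom / 4 ^ n

lemma invSqrtCoeff_pos (n : ℕ) : 0 < invSqrtCoeff n := by
  have := n.centralBinom_pos
  unfold invSqrtCoeff
  positivity

lemma invSqrtCoeff_succ (n : ℕ) :
    invSqrtCoeff (n + 1) = invSqrtCoeff n * (2⁻¹ + n) / (n + 1) := by
  have hcentral : ((n : ℝ) + 1) * (n + 1).centralBinom = 2 * (2 * n + 1) * n.centralBinom :=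
    mod_cast Nat.succ_mul_centralBinom_succ n
  rw [invSqrtCoeff, invSqrtCoeff]
  field_simp
  linear_combination 4 ^ n * 2 * hcentral

lemma ringMultichoose_half (n : ℕ) : Ring.multichoose (2⁻¹ : ℂ) n = (invSqrtCoeff n : ℂ) := by
  have hfact (m : ℕ) : (m.factorial : ℂ) * Ring.multichoose (2⁻¹ : ℂ) m =
      (ascPochhammer ℕ m).smeval (2⁻¹ : ℂ) := by
    rw [← Ring.factorial_nsmul_multichoose_eq_ascPochhammer, nsmul_eq_mul]
  induction n with
  | zero => simp [invSqrtCoeff]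
  | succ n ih =>
    have hrec := hfact (n + 1)
    rw [ascPochhammer_succ_right, Polynomial.smeval_mul, ← hfact, ih, Nat.factorial_succ] at hrec
    simp only [Polynomial.smeval_add, Polynomial.smeval_X, Polynomial.smeval_natCast, pow_one,
      pow_zero, nsmul_eq_mul, mul_one, Nat.cast_mul, Nat.cast_add, Nat.cast_one] at hrec
    have hn : (n : ℂ) + 1 ≠ 0 := n.cast_add_one_ne_zero
    have hn! : (n.factorial : ℂ) ≠ 0 := mod_cast n.factorial_ne_zero
    refine mul_left_cancel₀ (mul_ne_zero hn hn!) (hrec.trans ?_)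
    rw [invSqrtCoeff_succ]
    push_cast
    field_simp

lemma hasSum_invSqrtCoeff_mul_pow {z : ℂ} (hz : ‖z‖ < 1) :
    HasSum (fun n => (invSqrtCoeff n : ℂ) * z ^ n) (1 - z).sqrt⁻¹ := by
  have h := (Complex.one_div_one_sub_cpow_hasFPowerSeriesOnBall_zero 2⁻¹).hasSum
    (y := z) (by rw [← ENNReal.ofReal_one, Metric.eball_ofReal]; exact mem_ball_zero_iff.2 hz)
  rw [zero_add] at h
  simp only [FormalMultilinearSeries.ofScalars_apply_eq, ← Ring.multichoose_eq,
    ringMultichoose_half, smul_eq_mul, one_div] at h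
  exact h

lemma W_mul_invSqrtCoeff_sq (n : ℕ) :
    Real.Wallis.W n * (invSqrtCoeff n ^ 2 * (2 * n + 1)) = 1 := by
  induction n with
  | zero => simp [Real.Wallis.W, invSqrtCoeff]
  | succ n ih =>
    refine Eq.trans ?_ ih
    rw [Real.Wallis.W_succ, invSqrtCoeff_succ]
    push_cast
    field_simp
    ring

lemma tendsto_sqrt_add_mul_invSqrtCoeff (σ : ℝ) :
    Filter.Tendsto (fun n : ℕ => √(n + σ) * invSqrtCoeff n) Filter.atTop (nhds (√π)⁻¹) := by
  have hratio : Filter.Tendsto (fun n : ℕ => (σ + 1 * (n : ℝ)) / (1 + 2 * n)) Filter.atTop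
      (nhds (1 / 2)) :=
    tendsto_add_mul_div_add_mul_atTop_nhds σ 1 1 two_ne_zero
  have hsq : Filter.Tendsto (fun n : ℕ => (n + σ) * invSqrtCoeff n ^ 2) Filter.atTop
      (nhds (π⁻¹)) := by
    have h := (Real.Wallis.tendsto_W_nhds_pi_div_two.inv₀ (by positivity)).mul hratio
    rw [show (π / 2)⁻¹ * (1 / 2) = π⁻¹ by field_simp] at h
    refine h.congr fun n => ?_
    rw [inv_eq_of_mul_eq_one_right (W_mul_invSqrtCoeff_sq n)]
    field_simp
    ring
  rw [← Real.sqrt_inv]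
  refine hsq.sqrt.congr fun n => ?_
  rw [Real.sqrt_mul', Real.sqrt_sq (invSqrtCoeff_pos n).le]
  positivity

open Asymptotics in
lemma isLittleO_of_hasSum_mul_pow {a : ℕ → ℝ} {d : ℕ → ℂ} {A : ℝ → ℝ} {D : ℂ → ℂ} {u : ℂ}
    (ha : ∀ n, 0 ≤ a n) (hd : d =o[Filter.atTop] a) (hu : ‖u‖ = 1)
    (hA : ∀ r ∈ Set.Ioo (0 : ℝ) 1, HasSum (fun n => a n * r ^ n) (A r))
    (hA₁ : Filter.Tendsto A (nhdsWithin 1 (Set.Iio 1)) Filter.atTop)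
    (hD : ∀ w : ℂ, ‖w‖ < 1 → HasSum (fun n => d n * w ^ n) (D w)) :
    (fun r : ℝ => D (r * u)) =o[nhdsWithin 1 (Set.Iio 1)] A := by
  refine isLittleO_iff.2 fun ε hε => ?_
  obtain ⟨N, hN⟩ := Filter.eventually_atTop.1 (isLittleO_iff.1 hd (half_pos hε))
  set G := ∑ n ∈ Finset.range N, ‖d n‖
  filter_upwards [Ioo_mem_nhdsLT one_pos, hA₁.eventually_ge_atTop (2 * G / ε),
    hA₁.eventually_ge_atTop 0] with r hr hG hAr
  have hnorm : ‖(r : ℂ) * u‖ = r := by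
    rw [norm_mul, hu, mul_one, Complex.norm_real, Real.norm_of_nonneg hr.1.le]
  have hbound (n : ℕ) : ‖d n * (r * u) ^ n‖ ≤
      ε / 2 * (a n * r ^ n) + if n ∈ Finset.range N then ‖d n‖ else 0 := by
    have hrn : 0 ≤ r ^ n := pow_nonneg hr.1.le n
    rw [norm_mul, norm_pow, hnorm]
    split_ifs with hn
    · exact (mul_le_of_le_one_right (norm_nonneg _) (pow_le_one₀ hr.1.le hr.2.le)).trans
        (le_add_of_nonneg_left (mul_nonneg (half_pos hε).le (mul_nonneg (ha n) hrn)))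
    · have hdn := hN n (by simpa using hn)
      rw [Real.norm_of_nonneg (ha n)] at hdn
      rw [add_zero, ← mul_assoc]
      exact mul_le_mul_of_nonneg_right hdn hrn
  have hsum := ((hA r hr).mul_left (ε / 2)).add (hasSum_sum_of_ne_finset_zero (s := Finset.range N)
    (f := fun n => if n ∈ Finset.range N then ‖d n‖ else 0) fun n hn => if_neg hn)
  rw [Finset.sum_ite_mem, Finset.inter_self] at hsum
  rw [div_le_iff₀ hε] at hG
  calc ‖D (r * u)‖ = ‖∑' n, d n * (r * u) ^ n‖ := by
        rw [(hD _ (by rw [hnorm]; exact hr.2)).tsum_eq]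
    _ ≤ ε / 2 * A r + G := tsum_of_norm_bounded hsum hbound
    _ ≤ ε * ‖A r‖ := by rw [Real.norm_of_nonneg hAr]; linarith

section Abel

variable {P : ℕ → ℝ} {σ : ℝ} {B e : ℂ}

lemma two_mul_re_mul_pow (B : ℂ) (he : ‖e‖ = 1) (n : ℕ) :
    ((2 * (B * e ^ n).re : ℝ) : ℂ) = B * e ^ n + starRingEnd ℂ B * e⁻¹ ^ n := by
  rw [Complex.inv_eq_conj he, ← map_pow, ← map_mul, Complex.add_conj]

open Asymptotics in
lemma sub_sqrt_pi_mul_invSqrtCoeff_isLittleO (he : ‖e‖ = 1)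
    (hP : Filter.Tendsto (fun n : ℕ => √(n + σ) * P n - 2 * (B * e ^ n).re) Filter.atTop
      (nhds 0)) :
    (fun n => P n - √π * invSqrtCoeff n * (2 * (B * e ^ n).re)) =o[Filter.atTop]
      invSqrtCoeff := by
  have hscale := tendsto_sqrt_add_mul_invSqrtCoeff σ
  have hpi : (√π)⁻¹ ≠ 0 := by positivity
  have hbounded : Filter.IsBoundedUnder (· ≤ ·) Filter.atTop
      (norm ∘ fun n => 2 * (B * e ^ n).re) := by
    refine Filter.isBoundedUnder_of ⟨2 * ‖B‖, fun n => ?_⟩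
    have h := Complex.abs_re_le_norm (B * e ^ n)
    rw [norm_mul, norm_pow, he, one_pow, mul_one] at h
    rw [Function.comp_apply, norm_mul, Real.norm_two]
    exact mul_le_mul_of_nonneg_left h zero_le_two
  have hinv : Filter.Tendsto (fun n : ℕ => (√(n + σ) * invSqrtCoeff n)⁻¹ - √π) Filter.atTop
      (nhds 0) := by
    simpa only [inv_inv, sub_self] using (hscale.inv₀ hpi).sub_const (√π)
  have hlim := (hP.div hscale hpi).add (hinv.zero_mul_isBoundedUnder_le hbounded)
  simp only [Pi.div_apply, zero_div, add_zero] at hlim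
  refine (isLittleO_iff_tendsto fun n hn => absurd hn (invSqrtCoeff_pos n).ne').2
    (hlim.congr' ?_)
  filter_upwards [hscale.eventually_ne hpi] with n hn
  obtain ⟨hsqrt, hcoeff⟩ := mul_ne_zero_iff.1 hn
  field_simp
  ring

lemma tendsto_sqrt_one_sub : Filter.Tendsto (fun r : ℝ => √(1 - r)) (nhdsWithin 1 (Set.Iio 1))
    (nhdsWithin 0 (Set.Ioi 0)) := by
  refine tendsto_nhdsWithin_iff.2 ⟨?_, ?_⟩
  · have hcont : ContinuousAt (fun r : ℝ => √(1 - r)) 1 := by fun_prop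
    simpa only [sub_self, Real.sqrt_zero] using hcont.tendsto.mono_left nhdsWithin_le_nhds
  · filter_upwards [self_mem_nhdsWithin] with r hr using Real.sqrt_pos.2 (sub_pos.2 hr)

lemma complexSqrt_ofReal {x : ℝ} (hx : 0 ≤ x) : (x : ℂ).sqrt = (√x : ℝ) := by
  open ComplexOrder in rw [Complex.sqrt_of_nonneg (by exact_mod_cast hx), Complex.ofReal_re]

lemma tendsto_inv_sqrt_one_sub_ofReal_mul {u : ℂ} (hu : ‖u‖ = 1) (hu₁ : u ≠ 1) :
    Filter.Tendsto (fun r : ℝ => (1 - r * u).sqrt⁻¹) (nhdsWithin 1 (Set.Iio 1))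
      (nhds (1 - u).sqrt⁻¹) := by
  have hsqrt : ContinuousAt (fun z : ℂ => z.sqrt⁻¹) (1 - (1 : ℝ) * u) := by
    rw [Complex.ofReal_one, one_mul]
    exact (differentiableAt_complexSqrt (.inl (re_one_sub_pos hu.le hu₁))).continuousAt.inv₀
      (complexSqrt_ne_zero (sub_ne_zero.2 hu₁.symm))
  have hcont : ContinuousAt (fun r : ℝ => (1 - r * u : ℂ)) 1 := by fun_prop
  simpa only [Function.comp_def, Complex.ofReal_one, one_mul] using
    (hsqrt.comp_of_eq hcont rfl).tendsto.mono_left nhdsWithin_le_nhds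

lemma tendsto_sqrt_one_sub_mul_resonant (he : ‖e‖ = 1) (he₂ : e⁻¹ * e⁻¹ ≠ 1) (a b : ℂ) :
    Filter.Tendsto (fun r : ℝ => (√(1 - r) : ℂ) *
      (a * (1 - e * (r * e⁻¹)).sqrt⁻¹ + b * (1 - e⁻¹ * (r * e⁻¹)).sqrt⁻¹))
      (nhdsWithin 1 (Set.Iio 1)) (nhds a) := by
  have he₀ : e ≠ 0 := norm_pos_iff.1 (by rw [he]; exact one_pos)
  have he' : ‖e⁻¹ * e⁻¹‖ = 1 := by rw [norm_mul, norm_inv, he, inv_one, one_mul]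
  have hzero : Filter.Tendsto (fun r : ℝ => (√(1 - r) : ℂ)) (nhdsWithin 1 (Set.Iio 1))
      (nhds 0) :=
    (Complex.continuous_ofReal.tendsto 0).comp (tendsto_nhdsWithin_iff.1 tendsto_sqrt_one_sub).1
  have hlim := (hzero.mul ((tendsto_inv_sqrt_one_sub_ofReal_mul he' he₂).const_mul b)).const_add a
  rw [zero_mul, add_zero] at hlim
  refine hlim.congr' ?_
  filter_upwards [self_mem_nhdsWithin] with r (hr : r < 1)
  have hsqrt : (√(1 - r) : ℂ) ≠ 0 := mod_cast (Real.sqrt_pos.2 (sub_pos.2 hr)).ne'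
  have hreal : (1 - e * (r * e⁻¹)).sqrt = (√(1 - r) : ℂ) := by
    rw [mul_left_comm, mul_inv_cancel₀ he₀, mul_one, ← complexSqrt_ofReal (sub_nonneg.2 hr.le),
      Complex.ofReal_sub, Complex.ofReal_one]
  rw [hreal, mul_left_comm e⁻¹]
  field_simp

-- Subtracting `√π * invSqrtCoeff n * (B * e ^ n + conj B * e⁻¹ ^ n)` from `P n` leaves
-- `o(invSqrtCoeff n)`; summed against `(r * e⁻¹) ^ n`, only the term in `e ^ n` is singular.
theorem tendsto_sqrt_one_sub_mul_of_hasSum {F : ℂ → ℂ} (he : ‖e‖ = 1) (he₂ : e⁻¹ * e⁻¹ ≠ 1)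
    (hP : Filter.Tendsto (fun n : ℕ => √(n + σ) * P n - 2 * (B * e ^ n).re) Filter.atTop
      (nhds 0))
    (hF : ∀ w : ℂ, ‖w‖ < 1 → HasSum (fun n => (P n : ℂ) * w ^ n) (F w)) :
    Filter.Tendsto (fun r : ℝ => (√(1 - r) : ℂ) * F (r * e⁻¹)) (nhdsWithin 1 (Set.Iio 1))
      (nhds (√π * B)) := by
  have he' : ‖e⁻¹‖ = 1 := by rw [norm_inv, he, inv_one]
  set S : ℂ → ℂ := fun w =>
    √π * B * (1 - e * w).sqrt⁻¹ + √π * starRingEnd ℂ B * (1 - e⁻¹ * w).sqrt⁻¹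
  have hD (w : ℂ) (hw : ‖w‖ < 1) : HasSum
      (fun n => ((P n - √π * invSqrtCoeff n * (2 * (B * e ^ n).re) : ℝ) : ℂ) * w ^ n)
      (F w - S w) := by
    have hsum := hasSum_invSqrtCoeff_mul_pow (z := e * w) (by rwa [norm_mul, he, one_mul])
    have hsum' := hasSum_invSqrtCoeff_mul_pow (z := e⁻¹ * w) (by rwa [norm_mul, he', one_mul])
    refine ((hF w hw).sub ((hsum.mul_left (√π * B)).add
      (hsum'.mul_left (√π * starRingEnd ℂ B)))).congr_fun fun n => ?_
    rw [Complex.ofReal_sub, Complex.ofReal_mul, two_mul_re_mul_pow B he, Complex.ofReal_mul]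
    ring
  have hd : (fun n => ((P n - √π * invSqrtCoeff n * (2 * (B * e ^ n).re) : ℝ) : ℂ))
      =o[Filter.atTop] invSqrtCoeff :=
    Complex.isLittleO_ofReal_left.2 (sub_sqrt_pi_mul_invSqrtCoeff_isLittleO he hP)
  have hA (r : ℝ) (hr : r ∈ Set.Ioo 0 1) :
      HasSum (fun n => invSqrtCoeff n * r ^ n) (√(1 - r))⁻¹ := by
    have hsum := hasSum_invSqrtCoeff_mul_pow (z := r)
      (by rw [Complex.norm_real, Real.norm_of_nonneg hr.1.le]; exact hr.2)
    rw [← Complex.ofReal_one, ← Complex.ofReal_sub, complexSqrt_ofReal (sub_nonneg.2 hr.2.le)]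
      at hsum
    exact_mod_cast hsum
  have hdiff := (isLittleO_of_hasSum_mul_pow (fun n => (invSqrtCoeff_pos n).le) hd he' hA
    (tendsto_inv_nhdsGT_zero.comp tendsto_sqrt_one_sub) hD).tendsto_inv_smul_nhds_zero
  have hlim := hdiff.add (tendsto_sqrt_one_sub_mul_resonant he he₂ (√π * B)
    (√π * starRingEnd ℂ B))
  rw [zero_add] at hlim
  refine hlim.congr fun r => ?_
  rw [inv_inv, Complex.real_smul, ← mul_add, sub_add_cancel]

end Abel

/-! ### The leading amplitude -/

lemma tendsto_two_div_cpow {ι : Type*} {l : Filter ι} {f : ι → ℂ} {z : ℂ} (s : ℂ)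
    (hf : Filter.Tendsto f l (nhds z)) (hz : 0 < z.re) :
    Filter.Tendsto (fun i => (2 / f i) ^ s) l (nhds ((2 / z) ^ s)) :=
  (continuousAt_cpow_const (two_div_mem_slitPlane hz)).tendsto.comp
    (tendsto_const_nhds.div hf fun h => by simp [h] at hz)

lemma generatingSqrt_ofReal_mul_inv {e : ℂ} (he : e ≠ 0) {r : ℝ} (hr : r ≤ 1) :
    generatingSqrt e (r * e⁻¹) = √(1 - r) * (1 - r * (e⁻¹ * e⁻¹)).sqrt := by
  rw [generatingSqrt, mul_left_comm, mul_inv_cancel₀ he, mul_one, mul_left_comm e⁻¹,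
    ← complexSqrt_ofReal (sub_nonneg.2 hr), Complex.ofReal_sub, Complex.ofReal_one]

lemma tendsto_sqrt_one_sub_mul_jacobiGenFun (α β : ℝ) {e : ℂ} (he : ‖e‖ = 1)
    (he₂ : e⁻¹ * e⁻¹ ≠ 1) :
    Filter.Tendsto
      (fun r : ℝ => (√(1 - r) : ℂ) * jacobiGenFun α β (r * e⁻¹) (generatingSqrt e (r * e⁻¹)))
      (nhdsWithin 1 (Set.Iio 1))
      (nhds ((1 - e⁻¹ * e⁻¹).sqrt⁻¹ * (2 / (1 - e⁻¹)) ^ (α : ℂ) * (2 / (1 + e⁻¹)) ^ (β : ℂ))) := by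
  have he₀ : e ≠ 0 := norm_pos_iff.1 (by rw [he]; exact one_pos)
  have he' : ‖e⁻¹‖ = 1 := by rw [norm_inv, he, inv_one]
  have hinv : Filter.Tendsto (fun r : ℝ => (1 - r * (e⁻¹ * e⁻¹)).sqrt⁻¹)
      (nhdsWithin 1 (Set.Iio 1)) (nhds (1 - e⁻¹ * e⁻¹).sqrt⁻¹) :=
    tendsto_inv_sqrt_one_sub_ofReal_mul (by rw [norm_mul, he', one_mul]) he₂
  have hne : (1 - e⁻¹ * e⁻¹).sqrt⁻¹ ≠ 0 :=
    inv_ne_zero (complexSqrt_ne_zero (sub_ne_zero.2 he₂.symm))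
  have hroot : Filter.Tendsto (fun r : ℝ => generatingSqrt e (r * e⁻¹))
      (nhdsWithin 1 (Set.Iio 1)) (nhds 0) := by
    have hlim := ((Complex.continuous_ofReal.tendsto 0).comp
      (tendsto_nhdsWithin_iff.1 tendsto_sqrt_one_sub).1).mul (hinv.inv₀ hne)
    rw [Complex.ofReal_zero, zero_mul] at hlim
    refine hlim.congr' ?_
    filter_upwards [self_mem_nhdsWithin] with r hr
    rw [generatingSqrt_ofReal_mul_inv he₀ (le_of_lt hr), inv_inv, Function.comp_apply]
  have hray : Filter.Tendsto (fun r : ℝ => (r : ℂ) * e⁻¹) (nhdsWithin 1 (Set.Iio 1))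
      (nhds e⁻¹) := by
    have hcont : ContinuousAt (fun r : ℝ => (r : ℂ) * e⁻¹) 1 := by fun_prop
    simpa only [Complex.ofReal_one, one_mul] using hcont.tendsto.mono_left nhdsWithin_le_nhds
  have hminus := (hray.const_sub 1).add hroot
  have hplus := (hray.const_add 1).add hroot
  rw [add_zero] at hminus hplus
  have hre_minus : 0 < (1 - e⁻¹).re := re_one_sub_pos he'.le fun h => he₂ (by rw [h, one_mul])
  have hre_plus : 0 < (1 + e⁻¹).re := by
    rw [← sub_neg_eq_add]
    exact re_one_sub_pos (by rw [norm_neg, he']) fun h => he₂ (by rw [← neg_mul_neg, h, one_mul])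
  refine ((hinv.mul (tendsto_two_div_cpow α hminus hre_minus)).mul
    (tendsto_two_div_cpow β hplus hre_plus)).congr' ?_
  filter_upwards [self_mem_nhdsWithin] with r (hr : r < 1)
  have hsqrt : (√(1 - r) : ℂ) ≠ 0 := mod_cast (Real.sqrt_pos.2 (sub_pos.2 hr)).ne'
  rw [jacobiGenFun, generatingSqrt_ofReal_mul_inv he₀ hr.le, mul_inv]
  simp only [mul_assoc, mul_inv_cancel_left₀ hsqrt]

lemma one_sub_exp_neg_two_mul_I (φ : ℝ) : 1 - Complex.exp (-(2 * φ * Complex.I)) =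
    (2 * sin φ : ℝ) * Complex.exp ((π / 2 - φ : ℝ) * Complex.I) := by
  have hsplit : Complex.exp ((π / 2 - φ : ℝ) * Complex.I) =
      Complex.I * Complex.exp (-(φ * Complex.I)) := by
    rw [Complex.ofReal_sub, sub_mul, sub_eq_add_neg, Complex.exp_add, Complex.ofReal_div,
      Complex.ofReal_ofNat, Complex.exp_pi_div_two_mul_I]
  have hsq : Complex.exp (-(2 * φ * Complex.I)) = Complex.exp (-(φ * Complex.I)) ^ 2 := by
    rw [← Complex.exp_nat_mul]
    push_cast
    ring_nf
  have hone : Complex.exp (φ * Complex.I) * Complex.exp (-(φ * Complex.I)) = 1 := by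
    rw [← Complex.exp_add, add_neg_cancel, Complex.exp_zero]
  rw [hsplit, hsq, Complex.ofReal_mul, Complex.ofReal_ofNat, Complex.ofReal_sin, Complex.two_sin,
    neg_mul]
  linear_combination -hone + (Complex.exp (φ * Complex.I) - Complex.exp (-(φ * Complex.I))) *
    Complex.exp (-(φ * Complex.I)) * Complex.I_sq

lemma one_add_exp_neg_two_mul_I (φ : ℝ) : 1 + Complex.exp (-(2 * φ * Complex.I)) =
    (2 * cos φ : ℝ) * Complex.exp ((-φ : ℝ) * Complex.I) := by
  push_cast
  rw [Complex.two_cos, neg_mul, add_mul, ← Complex.exp_add, ← Complex.exp_add, add_neg_cancel,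
    Complex.exp_zero]
  ring_nf

lemma ofReal_mul_exp_mul_I_cpow {ρ φ : ℝ} (hρ : 0 < ρ) (hφ : φ ∈ Set.Ioc (-π) π) (s : ℝ) :
    ((ρ : ℂ) * Complex.exp (φ * Complex.I)) ^ (s : ℂ) =
      (ρ ^ s : ℝ) * Complex.exp ((φ * s : ℝ) * Complex.I) := by
  have hne : (ρ : ℂ) * Complex.exp (φ * Complex.I) ≠ 0 :=
    mul_ne_zero (mod_cast hρ.ne') (Complex.exp_ne_zero _)
  rw [Complex.cpow_def_of_ne_zero hne, Complex.log_ofReal_mul hρ (Complex.exp_ne_zero _),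
    Complex.log_exp (by simpa using hφ.1) (by simpa using hφ.2), Real.rpow_def_of_pos hρ,
    Complex.ofReal_exp, ← Complex.exp_add]
  push_cast
  ring_nf

lemma two_div_ofReal_mul_exp_mul_I_cpow {ρ φ : ℝ} (hρ : 0 < ρ) (hφ : φ ∈ Set.Ico (-π) π) (s : ℝ) :
    (2 / ((2 * ρ : ℝ) * Complex.exp (φ * Complex.I))) ^ (s : ℂ) =
      (ρ ^ (-s) : ℝ) * Complex.exp ((-(φ * s) : ℝ) * Complex.I) := by
  have hinv : 2 / ((2 * ρ : ℝ) * Complex.exp (φ * Complex.I)) =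
      (ρ⁻¹ : ℝ) * Complex.exp ((-φ : ℝ) * Complex.I) := by
    have hρ' : (ρ : ℂ) ≠ 0 := mod_cast hρ.ne'
    push_cast
    rw [neg_mul, Complex.exp_neg]
    field_simp
  rw [hinv, ofReal_mul_exp_mul_I_cpow (inv_pos.2 hρ) ⟨neg_lt_neg hφ.2, neg_le.1 hφ.1⟩,
    Real.inv_rpow hρ.le, Real.rpow_neg hρ.le, neg_mul]

/-- The complex amplitude of the asymptotic wave of the normalised Jacobi polynomials at `cos θ`:
`2 Re (jacobiAmplitude α β θ * e^{inθ})` is `m_{α,β}(θ) cos ω_α((n + (α + β + 1) / 2) θ)`. -/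
noncomputable def jacobiAmplitude (α β θ : ℝ) : ℂ :=
  (mAB α β θ / 2 : ℝ) * Complex.exp (omegaA α ((α + β + 1) / 2 * θ) * Complex.I)

lemma two_mul_re_jacobiAmplitude_mul_exp_pow (α β θ : ℝ) (n : ℕ) :
    2 * (jacobiAmplitude α β θ * Complex.exp (θ * Complex.I) ^ n).re =
      mAB α β θ * cos (omegaA α ((n + (α + β + 1) / 2) * θ)) := by
  have hphase : omegaA α ((α + β + 1) / 2 * θ) * Complex.I + n * (θ * Complex.I) =
      omegaA α ((n + (α + β + 1) / 2) * θ) * Complex.I := by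
    unfold omegaA
    push_cast
    ring
  rw [jacobiAmplitude, mul_assoc, ← Complex.exp_nat_mul, ← Complex.exp_add, hphase,
    Complex.re_ofReal_mul, Complex.exp_ofReal_mul_I_re]
  ring

section Amplitude

variable {θ : ℝ}

lemma sin_half_pos (hθ : θ ∈ Set.Ioo 0 π) : 0 < sin (θ / 2) :=
  sin_pos_of_pos_of_lt_pi (half_pos hθ.1) ((half_lt_self hθ.1).trans hθ.2)

lemma cos_half_pos (hθ : θ ∈ Set.Ioo 0 π) : 0 < cos (θ / 2) :=
  cos_pos_of_mem_Ioo ⟨by linarith [hθ.1, pi_pos], by linarith [hθ.2]⟩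

lemma mAB_pos (α β : ℝ) (hθ : θ ∈ Set.Ioo 0 π) : 0 < mAB α β θ := by
  have hsin := sin_half_pos hθ
  have hcos := cos_half_pos hθ
  unfold mAB
  positivity

lemma norm_jacobiAmplitude (α β : ℝ) (hθ : θ ∈ Set.Ioo 0 π) :
    ‖jacobiAmplitude α β θ‖ = mAB α β θ / 2 := by
  rw [jacobiAmplitude, norm_mul, Complex.norm_exp_ofReal_mul_I, mul_one, Complex.norm_real,
    Real.norm_of_nonneg (half_pos (mAB_pos α β hθ)).le]

lemma sqrt_pi_mul_half_mAB (α β : ℝ) (hθ : θ ∈ Set.Ioo 0 π) :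
    √π * (mAB α β θ / 2) =
      (√(2 * sin θ))⁻¹ * sin (θ / 2) ^ (-α) * cos (θ / 2) ^ (-β) := by
  have hsin := sin_half_pos hθ
  have hcos := cos_half_pos hθ
  have hdouble : 2 * sin θ = 2 ^ 2 * (sin (θ / 2) * cos (θ / 2)) := by
    rw [← mul_div_cancel₀ θ (two_ne_zero' ℝ), sin_two_mul, mul_div_cancel_left₀ _ two_ne_zero]
    ring
  rw [mAB, Real.rpow_neg pi_pos.le, Real.rpow_sub hsin, Real.rpow_sub hcos, hdouble,
    ← Real.sqrt_eq_rpow, ← Real.sqrt_eq_rpow, ← Real.sqrt_eq_rpow, Real.sqrt_mul (by positivity),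
    Real.sqrt_mul hsin.le, Real.sqrt_sq zero_le_two]
  field_simp

lemma singular_coefficient_eq (α β : ℝ) (hθ : θ ∈ Set.Ioo 0 π) {e : ℂ}
    (he : e = Complex.exp (θ * Complex.I)) :
    (1 - e⁻¹ * e⁻¹).sqrt⁻¹ * (2 / (1 - e⁻¹)) ^ (α : ℂ) * (2 / (1 + e⁻¹)) ^ (β : ℂ) =
      √π * jacobiAmplitude α β θ := by
  have ⟨hθ₀, hθπ⟩ : 0 < θ ∧ θ < π := hθ
  have hinv : e⁻¹ = Complex.exp (-(2 * (θ / 2 : ℝ) * Complex.I)) := by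
    rw [he, ← Complex.exp_neg]
    push_cast
    ring_nf
  have hinv_sq : e⁻¹ * e⁻¹ = Complex.exp (-(2 * θ * Complex.I)) := by
    rw [he, ← Complex.exp_neg, ← Complex.exp_add]
    ring_nf
  have hroot : (1 - e⁻¹ * e⁻¹).sqrt =
      √(2 * sin θ) * Complex.exp (((π / 2 - θ) * (1 / 2) : ℝ) * Complex.I) := by
    rw [hinv_sq, one_sub_exp_neg_two_mul_I, Real.sqrt_eq_rpow, ← ofReal_mul_exp_mul_I_cpow
      (mul_pos two_pos (sin_pos_of_mem_Ioo hθ)) ⟨by linarith, by linarith⟩, Complex.sqrt]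
    norm_num
  have hphase : Complex.exp (omegaA α ((α + β + 1) / 2 * θ) * Complex.I) =
      (Complex.exp (((π / 2 - θ) * (1 / 2) : ℝ) * Complex.I))⁻¹ *
        Complex.exp ((-((π / 2 - θ / 2) * α) : ℝ) * Complex.I) *
          Complex.exp ((-(-(θ / 2) * β) : ℝ) * Complex.I) := by
    rw [← Complex.exp_neg, ← Complex.exp_add, ← Complex.exp_add, omegaA]
    push_cast
    ring_nf
  rw [hroot, hinv, one_sub_exp_neg_two_mul_I, one_add_exp_neg_two_mul_I,
    two_div_ofReal_mul_exp_mul_I_cpow (sin_half_pos hθ) ⟨by linarith, by linarith⟩,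
    two_div_ofReal_mul_exp_mul_I_cpow (cos_half_pos hθ) ⟨by linarith, by linarith⟩,
    jacobiAmplitude, hphase, ← mul_assoc (√π : ℂ), ← Complex.ofReal_mul,
    sqrt_pi_mul_half_mAB α β hθ]
  push_cast
  ring

end Amplitude

/-! ### Asymptotics of the Jacobi polynomials -/

lemma eq_jacobiAmplitude_of_tendsto {α β θ : ℝ} {B : ℂ} (hα : -1 < α) (hβ : -1 < β)
    (hθ : θ ∈ Set.Ioo 0 π)
    (hB : Filter.Tendsto (fun n : ℕ => jacobiPNormalized α β n (cos θ) -
      2 * (B * Complex.exp (θ * Complex.I) ^ n).re) Filter.atTop (nhds 0)) :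
    B = jacobiAmplitude α β θ := by
  set e := Complex.exp (θ * Complex.I) with he
  have he_norm : ‖e‖ = 1 := Complex.norm_exp_ofReal_mul_I θ
  have he_inv : e⁻¹ = Complex.exp (-θ * Complex.I) := by rw [he, ← Complex.exp_neg, neg_mul]
  have hcos : 2 * (cos θ : ℝ) = e + e⁻¹ := by
    rw [he_inv, Complex.ofReal_cos, Complex.two_cos]
  have he₂ : e⁻¹ * e⁻¹ ≠ 1 := by
    have hsin : (sin θ : ℂ) ≠ 0 := mod_cast (sin_pos_of_mem_Ioo hθ).ne'
    intro h
    have hreal : e⁻¹ = e := by rw [eq_inv_of_mul_eq_one_left h, inv_inv]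
    refine hsin (mul_left_cancel₀ (two_ne_zero' ℂ) ?_)
    rw [Complex.ofReal_sin, Complex.two_sin, ← he_inv, ← he, hreal, sub_self, zero_mul, mul_zero]
  have hlim := tendsto_nhds_unique
    (tendsto_sqrt_one_sub_mul_of_hasSum he_norm he₂ hB fun w hw =>
      hasSum_jacobiP_mul_pow hα hβ he_norm hcos hw)
    (tendsto_sqrt_one_sub_mul_jacobiGenFun α β he_norm he₂)
  rw [singular_coefficient_eq α β hθ he] at hlim
  exact mul_left_cancel₀ (mod_cast (Real.sqrt_pos.2 pi_pos).ne') hlim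

theorem exists_abs_jacobiPNormalized_sub_le {α β : ℝ} (hα : -1 < α) (hβ : -1 < β) :
    ∃ C > 0, ∀ θ ∈ Set.Ioo 0 π, ∀ n : ℕ, C ≤ n * sin θ →
      |jacobiPNormalized α β n (cos θ) -
          mAB α β θ * cos (omegaA α ((n + (α + β + 1) / 2) * θ))| ≤
        C * mAB α β θ / (n * sin θ) := by
  obtain ⟨K, hK, hrec⟩ := exists_jacobiPNormalized_second_difference_le hα hβ
  obtain ⟨n₀, hn₀⟩ := Filter.eventually_atTop.1 hrec
  refine ⟨8 * K + n₀, by positivity, fun θ hθ n hn => ?_⟩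
  have hsin := sin_pos_of_mem_Ioo hθ
  obtain ⟨B, hB⟩ := exists_oscillation_of_second_difference_le
    (p := fun n => jacobiPNormalized α β n (cos θ)) hsin hK.le
    fun n hn => hn₀ n hn (cos θ) (abs_cos_le_one θ)
  have hnsin : Filter.Tendsto (fun n : ℕ => n * sin θ) Filter.atTop Filter.atTop :=
    tendsto_natCast_atTop_atTop.atTop_mul_const hsin
  have herror := (hnsin.const_div_atTop (16 * K)).mul_const ‖B‖
  rw [zero_mul] at herror
  obtain rfl : B = jacobiAmplitude α β θ := by
    refine eq_jacobiAmplitude_of_tendsto hα hβ hθ (squeeze_zero_norm' ?_ herror)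
    filter_upwards [Filter.eventually_ge_atTop n₀, Filter.eventually_ne_atTop 0,
      hnsin.eventually_ge_atTop (8 * K)] with n using hB n
  have hn_sin : n * sin θ ≤ n := mul_le_of_le_one_right n.cast_nonneg (sin_le_one θ)
  have hn₀n : (n₀ : ℝ) ≤ n := by linarith
  have hn_ne : n ≠ 0 := by
    rintro rfl
    rw [Nat.cast_zero, zero_mul] at hn
    linarith [n₀.cast_nonneg (α := ℝ)]
  have hm := mAB_pos α β hθ
  have hbound := hB n (mod_cast hn₀n) hn_ne (by linarith [n₀.cast_nonneg (α := ℝ)])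
  rw [two_mul_re_jacobiAmplitude_mul_exp_pow, norm_jacobiAmplitude α β hθ] at hbound
  calc _ ≤ 16 * K / (n * sin θ) * (mAB α β θ / 2) := hbound
    _ = 8 * K * mAB α β θ / (n * sin θ) := by ring
    _ ≤ (8 * K + n₀) * mAB α β θ / (n * sin θ) := by gcongr; simp

lemma two_div_pi_mul_le_sin {d θ : ℝ} (hd : 0 ≤ d) (hθ : d ≤ θ) (hθ' : θ ≤ π - d) :
    2 / π * d ≤ sin θ := by
  rcases le_total θ (π / 2) with h | h
  · exact (mul_le_mul_of_nonneg_left hθ (by positivity)).trans (mul_le_sin (hd.trans hθ) h)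
  · rw [← sin_pi_sub]
    exact (mul_le_mul_of_nonneg_left (le_sub_comm.1 hθ') (by positivity)).trans
      (mul_le_sin (hd.trans (le_sub_comm.1 hθ')) (by linarith))

/-- Lemma 2.3 i): one-term asymptotics of the Jacobi polynomial.  For `α,β > −1`
there are `c, C > 0` depending only on `α,β` such that for `ℓ ≥ 1` and
`c/ℓ ≤ θ ≤ π − c/ℓ`,
`|P_ℓ^{(α,β)}(cos θ) − ℓ̃^{−1/2} m_{α,β}(θ) cos ω_α(ℓ̃θ)|
   ≤ C ℓ̃^{−1/2} m_{α,β}(θ) (sin θ)^{−1} ℓ^{−1}`, where `ℓ̃ = ℓ + (α+β+1)/2`. -/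
theorem jacobi_one_term_asymptotics (α β : ℝ) (hα : -1 < α) (hβ : -1 < β) :
    ∃ c : ℝ, 0 < c ∧ ∃ C : ℝ, 0 < C ∧
      ∀ ℓ : ℕ, 1 ≤ ℓ → ∀ θ : ℝ, c / (ℓ : ℝ) ≤ θ → θ ≤ Real.pi - c / (ℓ : ℝ) →
        |jacobiP α β ℓ (Real.cos θ) -
            ((ℓ : ℝ) + (α + β + 1) / 2) ^ (-(1 / 2 : ℝ)) * mAB α β θ *
              Real.cos (omegaA α (((ℓ : ℝ) + (α + β + 1) / 2) * θ))| ≤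
          C * ((ℓ : ℝ) + (α + β + 1) / 2) ^ (-(1 / 2 : ℝ)) * mAB α β θ *
            (Real.sin θ)⁻¹ * (ℓ : ℝ)⁻¹ := by
  obtain ⟨C, hC, hP⟩ := exists_abs_jacobiPNormalized_sub_le hα hβ
  refine ⟨π / 2 * C, by positivity, C, hC, fun ℓ hℓ θ hθ hθ' => ?_⟩
  have hℓ₁ : (1 : ℝ) ≤ ℓ := mod_cast hℓ
  have hc : 0 < π / 2 * C / ℓ := by positivity
  have hθ_mem : θ ∈ Set.Ioo 0 π := ⟨hc.trans_le hθ, hθ'.trans_lt (sub_lt_self π hc)⟩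
  have hsin : C ≤ ℓ * sin θ :=
    calc C = ℓ * (2 / π * (π / 2 * C / ℓ)) := by field_simp
      _ ≤ ℓ * sin θ := by gcongr; exact two_div_pi_mul_le_sin hc.le hθ hθ'
  have hbound := hP θ hθ_mem ℓ hsin
  set N : ℝ := ℓ + (α + β + 1) / 2 with hN
  have hN₀ : 0 < √N := Real.sqrt_pos.2 (by linarith)
  rw [Real.rpow_neg (Real.sqrt_pos.1 hN₀).le, ← Real.sqrt_eq_rpow]
  rw [jacobiPNormalized, ← hN] at hbound
  calc _ = (√N)⁻¹ * |√N * jacobiP α β ℓ (cos θ) - mAB α β θ * cos (omegaA α (N * θ))| := by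
        rw [← abs_of_pos (inv_pos.2 hN₀), ← abs_mul, abs_of_pos (inv_pos.2 hN₀)]
        field_simp
    _ ≤ (√N)⁻¹ * (C * mAB α β θ / (ℓ * sin θ)) := by gcongr
    _ = _ := by field_simp
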